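/- (Elliptic analogue of Bailey's transformation formula for terminating ₁₀ω₉ series.) Let n be a nonnegative integer and let a, b, c, d, e, f, g be nonzero complex numbers with b·c·d·e·f·g = a³q^{2(n+2)}, and set λ = a²q²/(bcd). Assume that none of the theta factors appearing in the denominators of either side vanish. Then ₁₀ω₉[a; b, c, d, e, f, g, q^{−2n}] = [(aq², aq²/(ef), λq²/e, λq²/f)_n / (aq²/e, aq²/f, λq²/(ef), λq²)_n] · ₁₀ω₉[λ; λb/a, λc/a, λd/a, e, f, g, q^{−2n}]. -/

import Mathlib

noncomputable section

open Finset

/-- The normalized Jacobi theta function `θ(z) = ∏_{j≥0} (1 - z p^j)(1 - p^{j+1}/z)`. -/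
def theta (p : ℝ) (z : ℂ) : ℂ :=
  ∏' j : ℕ, ((1 - z * (p : ℂ) ^ j) * (1 - (p : ℂ) ^ (j + 1) / z))

/-- Complex power `q ^ l := exp (l · log q)` for a real base `q`. -/
def qp (q : ℝ) (l : ℂ) : ℂ := Complex.exp (l * (Real.log q : ℂ))

/-- Elliptic Pochhammer symbol `(a)_n = ∏_{i=0}^{n-1} θ(a q^{2i})` in base `q², p`. -/
def epoch (p q : ℝ) (a : ℂ) (n : ℕ) : ℂ :=
  ∏ i ∈ Finset.range n, theta p (a * qp q (2 * (i : ℂ)))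

/-- Elliptic binomial coefficient `[k over l] = ∏_{i=1}^{l} θ(q^{2(k-l+i)})/θ(q^{2i})`. -/
def ellbin (p q : ℝ) (k l : ℕ) : ℂ :=
  ∏ i ∈ Finset.range l,
    theta p (qp q (2 * ((k : ℂ) - (l : ℂ) + (i : ℂ) + 1))) / theta p (qp q (2 * ((i : ℂ) + 1)))

/-- Entry `a(λ,z)` of the Andrews–Baxter–Forrester `R`-matrix. -/
def Ra (p q : ℝ) (lam z : ℂ) : ℂ :=
  theta p z * theta p (qp q (2 * (lam + 2))) /
    (theta p (qp q 2 * z) * theta p (qp q (2 * (lam + 1))))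

/-- Entry `b(λ,z)` of the Andrews–Baxter–Forrester `R`-matrix. -/
def Rb (p q : ℝ) (lam z : ℂ) : ℂ :=
  theta p (qp q 2) * theta p (qp q (-2 * (lam + 1)) * z) /
    (theta p (qp q 2 * z) * theta p (qp q (-2 * (lam + 1))))

/-- Entry `c(λ,z)` of the Andrews–Baxter–Forrester `R`-matrix. -/
def Rc (p q : ℝ) (lam z : ℂ) : ℂ :=
  theta p (qp q 2) * theta p (qp q (2 * (lam + 1)) * z) /
    (theta p (qp q 2 * z) * theta p (qp q (2 * (lam + 1))))

/-- Entry `d(λ,z)` of the Andrews–Baxter–Forrester `R`-matrix. -/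
def Rd (p q : ℝ) (lam z : ℂ) : ℂ :=
  theta p z * theta p (qp q (-2 * lam)) /
    (theta p (qp q 2 * z) * theta p (qp q (-2 * (lam + 1))))

/-- Coefficient `A_k(λ,z)` of the Felder–Varchenko dynamical representation `π^ω`. -/
def Ak (p q : ℝ) (om : ℂ) (k : ℕ) (lam z : ℂ) : ℂ :=
  qp q (2 * (k : ℂ)) * theta p (qp q (-2 * (lam + 1) - 2 * (k : ℂ))) *
      theta p (z * qp q (om - 2 * (k : ℂ) + 1)) /
    (theta p (qp q (-2 * (lam + 1))) * theta p (z * qp q (om + 1)))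

/-- Coefficient `B_k(λ,z)` of the Felder–Varchenko dynamical representation `π^ω`. -/
def Bk (p q : ℝ) (om : ℂ) (k : ℕ) (lam z : ℂ) : ℂ :=
  qp q (k : ℂ) * theta p (qp q 2) *
      theta p (z * qp q (-2 * (lam + 1) + om - 2 * (k : ℂ) - 1)) /
    (theta p (qp q (-2 * (lam + 1))) * theta p (z * qp q (om + 1)))

/-- Coefficient `C_k(λ,z)` of the Felder–Varchenko dynamical representation `π^ω`;
`C_0 = 0`. -/
def Ck (p q : ℝ) (om : ℂ) (k : ℕ) (lam z : ℂ) : ℂ :=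
  if k = 0 then 0
  else
    qp q (-((k : ℂ) - 1)) * theta p (qp q (2 * (k : ℂ))) *
        theta p (qp q (2 * (om - (k : ℂ) + 1))) *
        theta p (z * qp q (2 * (lam + 1) - om + 2 * (k : ℂ) - 1)) /
      (theta p (qp q 2) * theta p (qp q (2 * (lam + 1))) * theta p (z * qp q (om + 1)))

/-- Coefficient `D_k(λ,z)` of the Felder–Varchenko dynamical representation `π^ω`. -/
def Dk (p q : ℝ) (om : ℂ) (k : ℕ) (lam z : ℂ) : ℂ :=
  theta p (qp q (-2 * (lam + 1 - om + (k : ℂ)))) * theta p (z * qp q (-om + 2 * (k : ℂ) + 1)) /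
    (theta p (qp q (-2 * (lam + 1))) * theta p (z * qp q (om + 1)))

/-- `F(μ) = q^μ θ(q^{-2(μ+1)})`. -/
def Fdet (p q : ℝ) (mu : ℂ) : ℂ := qp q mu * theta p (qp q (-2 * (mu + 1)))

/-- The coefficient `C_{kl}(μ)` from the corepresentation matrix elements. -/
def Ckl (p q : ℝ) (k l : ℕ) (mu : ℂ) : ℂ :=
  ellbin p q k l * epoch p q (qp q (2 * (mu - (l : ℂ) + 2))) l /
    epoch p q (qp q (2 * (mu + (k : ℂ) - 2 * (l : ℂ) + 2))) l

/-- The terminating balanced very-well-poised elliptic hypergeometric series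
`₁₀ω₉(a₁; a₄,…,a₁₀)`, truncated at `n`. -/
def tenW9 (p q : ℝ) (n : ℕ) (a1 a4 a5 a6 a7 a8 a9 a10 : ℂ) : ℂ :=
  ∑ k ∈ Finset.range (n + 1),
    theta p (a1 * qp q (4 * (k : ℂ))) / theta p a1 *
      (epoch p q a1 k * epoch p q a4 k * epoch p q a5 k * epoch p q a6 k * epoch p q a7 k *
        epoch p q a8 k * epoch p q a9 k * epoch p q a10 k * qp q (2 * (k : ℂ))) /
      (epoch p q (qp q 2) k * epoch p q (a1 * qp q 2 / a4) k * epoch p q (a1 * qp q 2 / a5) k *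
        epoch p q (a1 * qp q 2 / a6) k * epoch p q (a1 * qp q 2 / a7) k *
        epoch p q (a1 * qp q 2 / a8) k * epoch p q (a1 * qp q 2 / a9) k *
        epoch p q (a1 * qp q 2 / a10) k)

/-- The product of all theta factors appearing in denominators of the terms of
`tenW9 p q n a1 a4 … a10` (including the `θ(a₁)` from the very-well-poised prefactor). -/
def tenW9Den (p q : ℝ) (n : ℕ) (a1 a4 a5 a6 a7 a8 a9 a10 : ℂ) : ℂ :=
  theta p a1 * epoch p q (qp q 2) n * epoch p q (a1 * qp q 2 / a4) n *
    epoch p q (a1 * qp q 2 / a5) n * epoch p q (a1 * qp q 2 / a6) n *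
    epoch p q (a1 * qp q 2 / a7) n * epoch p q (a1 * qp q 2 / a8) n *
    epoch p q (a1 * qp q 2 / a9) n * epoch p q (a1 * qp q 2 / a10) n

/-!
Writing `θ(eˣ) = e^(x/2) s(x)` makes the theta function into an odd entire function `s`, and the
balancing condition makes all the factors `e^(x/2)` cancel. By the Jacobi triple product,
`s(x + y) s(x - y)` is an antisymmetric bilinear form in functions of `x` and of `y`, so that the
Plücker relation for such forms becomes the three-term relation of the Weierstrass sigma function.
That relation alone gives the Frenkel–Turaev summation formula, by induction on the length `n`: the
difference of the series for `n + 1` and for `n` is a multiple of a series for `n` with shifted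
parameters.

For the transformation, the summation formula expands the factors of the `k`-th term which involve
`b`, `c`, `d` into a sum over `j ≤ k` of terms based on `λ`. After interchanging the two sums, the
sum over `k` is again an instance of the summation formula. This needs denominators that do not
occur in the transformation itself; since the zeros of an entire function are isolated, the
remaining parameters are limits of generic ones.
-/

section ThreeTerm

variable {F K : Type*} [Field F] [Field K]

/-- The addition formula of the Weierstrass sigma function, as a condition on an arbitrary function
`s`. Besides the sigma functions it is satisfied by `sin`, `sinh` and the identity. -/
def ThreeTermRelation (s : F → K) : Prop :=
  ∀ x y u v : F,
    s (x + y) * s (x - y) * s (u + v) * s (u - v) - s (x + v) * s (x - v) * s (u + y) * s (u - y) =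
      s (x + u) * s (x - u) * s (y + v) * s (y - v)

variable {s : F → K}

theorem ThreeTermRelation.of_plucker {α β : F → K}
    (hs : ∀ x y, s (x + y) * s (x - y) = α x * β y - α y * β x) : ThreeTermRelation s := by
  intro x y u v
  linear_combination s (u + v) * s (u - v) * hs x y + (α x * β y - α y * β x) * hs u v -
    s (u + y) * s (u - y) * hs x v - (α x * β v - α v * β x) * hs u y -
    s (y + v) * s (y - v) * hs x u - (α x * β u - α u * β x) * hs y v

theorem ThreeTermRelation.map_zero (hs : ThreeTermRelation s) : s 0 = 0 := by
  by_contra h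
  have := hs 0 0 0 0
  simp [h] at this

variable [NeZero (2 : F)]

theorem ThreeTermRelation.odd (hs : ThreeTermRelation s) : s.Odd := by
  intro w
  by_cases! hzero : ∀ z, s z = 0
  · simp [hzero]
  obtain ⟨z, hz⟩ := hzero
  have hplus : (z + w) / 2 + (z - w) / 2 = z := by field
  have hminus : (z + w) / 2 - (z - w) / 2 = w := by field
  have hswap := hs z ((z - w) / 2) 0 ((z + w) / 2)
  rw [add_comm ((z - w) / 2) ((z + w) / 2), ← neg_sub ((z + w) / 2) ((z - w) / 2),
    hplus, hminus, add_zero, sub_zero] at hswap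
  have hdirect := hs z ((z + w) / 2) 0 ((z - w) / 2)
  rw [hplus, hminus, add_zero, sub_zero] at hdirect
  have : s z * s z * s z * (s (-w) + s w) = 0 := by
    linear_combination (exp := 1) -hswap - hdirect
  exact eq_neg_of_add_eq_zero_left <| (mul_eq_zero.mp this).resolve_left (by simp [hz])

theorem ThreeTermRelation.shifted (hs : ThreeTermRelation s) (x y a b : F) :
    s (x + b) * s (x + a - b) * (s (y + a) * s y) - s (x + a) * s x * (s (y + b) * s (y + a - b)) =
      s (x + y + a) * s (y - x) * (s b * s (a - b)) := by
  have key := hs (x + a / 2) (b - a / 2) (y + a / 2) (a / 2)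
  have hodd := hs.odd
  rw [show x + a / 2 + (b - a / 2) = x + b by ring,
    show x + a / 2 - (b - a / 2) = x + a - b by field,
    show y + a / 2 + a / 2 = y + a by field, show y + a / 2 - a / 2 = y by ring,
    show x + a / 2 + a / 2 = x + a by field, show x + a / 2 - a / 2 = x by ring,
    show y + a / 2 + (b - a / 2) = y + b by ring, show y + a / 2 - (b - a / 2) = y + a - b by field,
    show x + a / 2 + (y + a / 2) = x + y + a by field,
    show x + a / 2 - (y + a / 2) = -(y - x) by ring, show b - a / 2 + a / 2 = b by ring,
    show b - a / 2 - a / 2 = -(a - b) by field, hodd, hodd] at key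
  linear_combination key

theorem ThreeTermRelation.frenkelTuraev_step (hs : ThreeTermRelation s) (m b c d : F) :
    s m * s (m - b - c) * s (m - b - d) * s (m - c - d) =
      s (m - b) * s (m - c) * s (m - d) * s (m - b - c - d) +
        s b * s c * s d * s (2 * m - b - c - d) := by
  have key := hs.shifted (m - b - c - d) (m - b - c) (b + c) c
  ring_nf at key ⊢
  linear_combination key

end ThreeTerm

section Pochhammer

variable {F K : Type*} [Field F] [Field K]

/-- The additive shifted factorial `(x)_n = s(x) s(x + h) ⋯ s(x + (n - 1) h)`. -/
def poch (s : F → K) (h x : F) (n : ℕ) : K := ∏ i ∈ range n, s (x + i * h)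

variable {s : F → K} {h x y : F} {m n : ℕ}

@[simp]
theorem poch_zero (s : F → K) (h x : F) : poch s h x 0 = 1 := by simp [poch]

theorem poch_succ (s : F → K) (h x : F) (n : ℕ) :
    poch s h x (n + 1) = poch s h x n * s (x + n * h) := prod_range_succ ..

theorem poch_succ' (s : F → K) (h x : F) (n : ℕ) :
    poch s h x (n + 1) = s x * poch s h (x + h) n := by
  simp only [poch, prod_range_succ']
  rw [mul_comm]
  congr 1
  · simp
  · exact prod_congr rfl fun i _ => by congr 1; push_cast; ring

theorem poch_add (s : F → K) (h x : F) (m n : ℕ) :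
    poch s h x (m + n) = poch s h x m * poch s h (x + m * h) n := by
  simp only [poch, prod_range_add]
  congr 1
  exact prod_congr rfl fun i _ => by congr 1; push_cast; ring

theorem poch_reflect (hs : s.Odd) (hxy : x + y + n * h = h) :
    poch s h x n = (-1) ^ n * poch s h y n := by
  rw [poch, ← prod_range_reflect, poch, ← card_range n, ← prod_const, card_range,
    ← prod_mul_distrib]
  refine prod_congr rfl fun i hi => ?_
  have hcast : ((n - 1 - i : ℕ) : F) = n - 1 - i := by
    rw [mem_range] at hi
    rw [Nat.sub_sub, Nat.cast_sub (by lia)]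
    push_cast
    ring
  rw [neg_one_mul, ← hs, hcast]
  congr 1
  linear_combination hxy

theorem ne_zero_of_poch_ne_zero (hx : poch s h x n ≠ 0) (i : ℕ) (hi : i < n)
    (hy : y = x + i * h := by push_cast; ring) : s y ≠ 0 :=
  hy ▸ prod_ne_zero_iff.mp hx i (mem_range.mpr hi)

theorem poch_ne_zero_of_le (hx : poch s h x n ≠ 0) (i : ℕ) (hi : i + m ≤ n)
    (hy : y = x + i * h := by push_cast; ring) : poch s h y m ≠ 0 := by
  rw [poch, prod_ne_zero_iff]
  intro j hj
  rw [mem_range] at hj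
  exact ne_zero_of_poch_ne_zero hx (i + j) (by lia) (by rw [hy]; push_cast; ring)

theorem poch_mul_shift (s : F → K) (h x : F) (n : ℕ) :
    s x * poch s h (x + h) n = poch s h x n * s (x + n * h) := by
  rw [← poch_succ', poch_succ]

theorem poch_shift (hx : s x ≠ 0) : poch s h (x + h) n = poch s h x n * (s (x + n * h) / s x) := by
  rw [← mul_div_assoc, eq_div_iff hx, ← poch_mul_shift, mul_comm]

theorem poch_mul_shift_two (s : F → K) (h x : F) (n : ℕ) :
    s x * s (x + h) * poch s h (x + 2 * h) n =
      poch s h x n * (s (x + n * h) * s (x + (n + 1) * h)) := by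
  have := poch_succ s h x (n + 1)
  rw [poch_succ', poch_succ', poch_succ] at this
  push_cast at this
  rw [show x + 2 * h = x + h + h by ring]
  linear_combination this

/-- The ratio `(b)_k / (a + h - b)_k` of the two factorials that an upper parameter `b` contributes
to the `k`-th term of a well-poised series based on `a`. -/
def wellPoisedRatio (s : F → K) (h a b : F) (k : ℕ) : K := poch s h b k / poch s h (a + h - b) k

@[simp]
theorem wellPoisedRatio_zero (s : F → K) (h a b : F) : wellPoisedRatio s h a b 0 = 1 := by
  simp [wellPoisedRatio]

theorem wellPoisedRatio_add (s : F → K) (h a b : F) (j i : ℕ) :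
    wellPoisedRatio s h a b (j + i) =
      wellPoisedRatio s h a b j * wellPoisedRatio s h (a + 2 * j * h) (b + j * h) i := by
  simp only [wellPoisedRatio, poch_add, mul_div_mul_comm]
  ring_nf

theorem wellPoisedRatio_succ (s : F → K) (h a b : F) (k : ℕ) :
    wellPoisedRatio s h a b (k + 1) =
      s b / s (a + h - b) * wellPoisedRatio s h (a + 2 * h) (b + h) k := by
  rw [add_comm, wellPoisedRatio_add]
  simp [wellPoisedRatio, poch_succ]

theorem wellPoisedRatio_succ_eq_shift_base {a b : F} {k : ℕ}
    (hb : poch s h (a + h - b) (k + 2) ≠ 0) :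
    wellPoisedRatio s h a b (k + 1) =
      wellPoisedRatio s h (a + 2 * h) b k * (s (b + k * h) * s (a + h - b + (k + 1) * h) /
        (s (a + h - b) * s (a + 2 * h - b))) := by
  have h0 : s (a + h - b) ≠ 0 := ne_zero_of_poch_ne_zero hb 0 (by lia)
  have h1 : s (a + 2 * h - b) ≠ 0 := ne_zero_of_poch_ne_zero hb 1 (by lia)
  have hshift : poch s h (a + 2 * h + h - b) k ≠ 0 := poch_ne_zero_of_le hb 2 (by lia)
  have hsplit := poch_mul_shift_two s h (a + h - b) k
  rw [show a + h - b + 2 * h = a + 2 * h + h - b by ring,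
    show a + h - b + h = a + 2 * h - b by ring] at hsplit
  have hk : poch s h (a + h - b) k ≠ 0 := poch_ne_zero_of_le hb 0 (by lia)
  have hk1 : s (a + h - b + k * h) ≠ 0 := ne_zero_of_poch_ne_zero hb k (by lia)
  rw [wellPoisedRatio, wellPoisedRatio, poch_succ, poch_succ, div_mul_div_comm,
    div_eq_div_iff (by simp [hk, hk1]) (by simp [hshift, h0, h1])]
  linear_combination poch s h b k * s (b + k * h) * hsplit

theorem wellPoisedRatio_self_succ {a : F} {k : ℕ}
    (ha : s ((k + 1) * h + a) ≠ 0) :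
    wellPoisedRatio s h a a (k + 1) = wellPoisedRatio s h (a + 2 * h) (a + 2 * h) k *
      (s a * s (a + h) / (s ((k + 1) * h + a) * s ((k + 1) * h))) := by
  have hsplit := poch_mul_shift_two s h a k
  rw [add_comm a ((k + 1) * h)] at hsplit
  simp only [wellPoisedRatio, add_sub_cancel_left, poch_succ]
  rw [div_mul_div_comm, ← mul_div_mul_right _ _ ha]
  congr 1
  · linear_combination -hsplit
  · ring_nf

end Pochhammer

section FrenkelTuraev

variable {F K : Type*} [Field F] [Field K]

/-- The `k`-th term of the very-well-poised series based on `a` with upper parameters `bs`. The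
parameter `a` itself, which comes with the lower parameter `h`, is not repeated in `bs`. -/
def vwpTerm (s : F → K) (h a : F) (bs : List F) (k : ℕ) : K :=
  s (a + 2 * k * h) / s a * ((a :: bs).map fun b => wellPoisedRatio s h a b k).prod

/-- The value of the very-well-poised series based on `a` whose upper parameters are `b`, `c`, `d`,
`-n h`, and a fifth one determined by the balancing condition. -/
def frenkelTuraevProduct (s : F → K) (h : F) (n : ℕ) (a b c d : F) : K :=
  poch s h (a + h) n * poch s h (a + h - b - c) n * poch s h (a + h - b - d) n *
      poch s h (a + h - c - d) n /
    (poch s h (a + h - b) n * poch s h (a + h - c) n * poch s h (a + h - d) n *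
      poch s h (a + h - b - c - d) n)

variable {s : F → K} {h a b c d e : F} {k n : ℕ}

theorem vwpTerm_cons (s : F → K) (h a b : F) (bs : List F) (k : ℕ) :
    vwpTerm s h a (b :: bs) k = wellPoisedRatio s h a b k * vwpTerm s h a bs k := by
  simp only [vwpTerm, List.map_cons, List.prod_cons]
  ring

theorem vwpTerm_perm {bs cs : List F} (hbs : bs.Perm cs) :
    vwpTerm s h a bs k = vwpTerm s h a cs k := by
  rw [vwpTerm, ((hbs.cons a).map _).prod_eq, vwpTerm]

theorem vwpTerm_zero (bs : List F) (ha : s a ≠ 0) : vwpTerm s h a bs 0 = 1 := by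
  simp [vwpTerm, ha]

theorem vwpTerm_eq_zero_of_lt (hs0 : s 0 = 0) {bs : List F} (hbs : -(n * h) ∈ bs) (hk : n < k) :
    vwpTerm s h a bs k = 0 := by
  have hpoch : poch s h (-(n * h)) k = 0 :=
    prod_eq_zero (mem_range.mpr hk) (by rw [neg_add_cancel, hs0])
  refine mul_eq_zero_of_right _ <| List.prod_eq_zero <| List.mem_map.mpr
    ⟨-(n * h), by simp [hbs], ?_⟩
  rw [wellPoisedRatio, hpoch, zero_div]

theorem vwpTerm_nil_succ (ha : s a ≠ 0) (ha2 : s (a + 2 * h) ≠ 0)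
    (hak : s ((k + 1) * h + a) ≠ 0) :
    vwpTerm s h a [] (k + 1) = vwpTerm s h (a + 2 * h) [] k *
      (s (a + h) * s (a + 2 * h) / (s ((k + 1) * h + a) * s ((k + 1) * h))) := by
  have harg : a + 2 * (k + 1 : ℕ) * h = a + 2 * h + 2 * k * h := by push_cast; ring
  simp only [vwpTerm, List.map_cons, List.map_nil, List.prod_singleton, harg]
  rw [wellPoisedRatio_self_succ hak]
  field

theorem vwpTerm_pair_succ_sub [NeZero (2 : F)] (hs : ThreeTermRelation s) (hk : k ≤ n)
    (hh : poch s h h (n + 1) ≠ 0) (ha : poch s h a (2 * n + 3) ≠ 0)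
    (he : poch s h (a - e) (n + 2) ≠ 0) :
    vwpTerm s h a [e + h, -((n + 1) * h)] (k + 1) - vwpTerm s h a [e, -(n * h)] (k + 1) =
      -(s (a + h) * s (a + 2 * h) * s ((n + 1) * h + e) * s ((n + 1) * h + a - e) /
        (s (a - e) * s (a + h - e) * s ((n + 1) * h + a) * s (a + (n + 2) * h))) *
          vwpTerm s h (a + 2 * h) [e + h, -(n * h)] k := by
  have ha0 : s a ≠ 0 := ne_zero_of_poch_ne_zero ha 0 (by lia)
  have hak : s ((k + 1) * h + a) ≠ 0 := ne_zero_of_poch_ne_zero ha (k + 1) (by lia)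
  have hhk : s ((k + 1) * h) ≠ 0 := ne_zero_of_poch_ne_zero hh k (by lia)
  have ha2 : s (a + 2 * h) ≠ 0 := ne_zero_of_poch_ne_zero ha 2 (by lia)
  have han : s ((n + 1) * h + a) ≠ 0 := ne_zero_of_poch_ne_zero ha (n + 1) (by lia)
  have han' : s (a + (n + 2) * h) ≠ 0 := ne_zero_of_poch_ne_zero ha (n + 2) (by lia)
  have he0 : s (a - e) ≠ 0 := ne_zero_of_poch_ne_zero he 0 (by lia)
  have he1 : s (a + h - e) ≠ 0 := ne_zero_of_poch_ne_zero he 1 (by lia)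
  have hshift_e : wellPoisedRatio s h a (e + h) (k + 1) =
      wellPoisedRatio s h (a + 2 * h) (e + h) k *
        (s ((k + 1) * h + e) * s ((k + 1) * h + a - e) / (s (a - e) * s (a + h - e))) := by
    rw [wellPoisedRatio_succ_eq_shift_base (poch_ne_zero_of_le he 0 (by lia))]
    ring_nf
  have hshift_n : wellPoisedRatio s h a (-(n * h)) (k + 1) =
      wellPoisedRatio s h (a + 2 * h) (-(n * h)) k *
        (-s ((n + 1) * h - (k + 1) * h) * s ((k + 1) * h + (n + 1) * h + a) /
          (s ((n + 1) * h + a) * s (a + (n + 2) * h))) := by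
    rw [wellPoisedRatio_succ_eq_shift_base (poch_ne_zero_of_le ha (n + 1) (by lia)), ← hs.odd]
    ring_nf
  have hsucc_e := wellPoisedRatio_succ s h a e k
  have hsucc_n : wellPoisedRatio s h a (-((n + 1) * h)) (k + 1) =
      -s ((n + 1) * h) / s (a + (n + 2) * h) * wellPoisedRatio s h (a + 2 * h) (-(n * h)) k := by
    rw [wellPoisedRatio_succ, ← hs.odd]
    ring_nf
  have hthree := hs.shifted ((k + 1) * h) ((n + 1) * h) a e
  simp only [vwpTerm_cons, vwpTerm_nil_succ ha0 ha2 hak, hshift_e, hshift_n, hsucc_e, hsucc_n]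
  generalize (k + 1) * h = x, (n + 1) * h = y, (n + 2) * h = z, n * h = w at *
  field_simp
  linear_combination -(vwpTerm s h (a + 2 * h) [] k * wellPoisedRatio s h (a + 2 * h) (e + h) k *
    wellPoisedRatio s h (a + 2 * h) (-w) k * s (a + h)) * hthree

theorem frenkelTuraevProduct_succ (s : F → K) (h : F) (n : ℕ) (a b c d m : F)
    (hm : m = a + (n + 1) * h) :
    frenkelTuraevProduct s h (n + 1) a b c d = frenkelTuraevProduct s h n a b c d *
      (s m * s (m - b - c) * s (m - b - d) * s (m - c - d) /
        (s (m - b) * s (m - c) * s (m - d) * s (m - b - c - d))) := by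
  subst hm
  simp only [frenkelTuraevProduct, poch_succ, div_mul_div_comm]
  ring_nf

theorem frenkelTuraevProduct_shift {m : F} (hm : m = a + (n + 1) * h)
    (ha : poch s h (a + h) 2 ≠ 0) (hb : s (a + h - b) ≠ 0)
    (hc : s (a + h - c) ≠ 0) (hd : s (a + h - d) ≠ 0)
    (hbcd : s (m - b - c - d - h) ≠ 0) :
    frenkelTuraevProduct s h n (a + 2 * h) (b + h) (c + h) (d + h) =
      frenkelTuraevProduct s h n a b c d *
        (s m * s (m + h) / (s (a + h) * s (a + 2 * h)) * (s (a + h - b) / s (m - b)) *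
          (s (a + h - c) / s (m - c)) * (s (a + h - d) / s (m - d)) *
            (s (m - b - c - d - h) / s (a - b - c - d))) := by
  have hshift : ∀ x, s (a + h - x) ≠ 0 → poch s h (a + 2 * h + h - (x + h)) n =
      poch s h (a + h - x) n * (s (m - x) / s (a + h - x)) := by
    intro x hx
    rw [show a + 2 * h + h - (x + h) = a + h - x + h by ring, poch_shift hx, hm]
    ring_nf
  have hbase : poch s h (a + 2 * h + h) n =
      poch s h (a + h) n * (s m * s (m + h) / (s (a + h) * s (a + 2 * h))) := by
    have ha0 : s (a + h) ≠ 0 := ne_zero_of_poch_ne_zero ha 0 (by lia)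
    have ha1 : s (a + h + h) ≠ 0 := ne_zero_of_poch_ne_zero ha 1 (by lia)
    rw [show a + 2 * h + h = a + h + h + h by ring, poch_shift ha1, poch_shift ha0, hm]
    ring_nf
  have hlast : poch s h (a + 2 * h + h - (b + h) - (c + h) - (d + h)) n =
      poch s h (a + h - b - c - d) n * (s (a - b - c - d) / s (m - b - c - d - h)) := by
    have := poch_mul_shift s h (a - b - c - d) n
    rw [← mul_div_assoc, eq_div_iff hbcd, hm]
    ring_nf at this ⊢
    linear_combination -this
  have hpair : ∀ x y, a + 2 * h + h - (x + h) - (y + h) = a + h - x - y := fun x y => by ring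
  simp only [frenkelTuraevProduct, hlast, hbase, hshift b hb, hshift c hc, hshift d hd]
  simp only [hpair, div_eq_mul_inv, mul_inv, inv_inv]
  ring

theorem frenkelTuraevProduct_succ_sub_eq_mul [NeZero (2 : F)] (hs : ThreeTermRelation s) {m : F}
    (hm : m = a + (n + 1) * h) (hb : s (m - b) ≠ 0) (hc : s (m - c) ≠ 0) (hd : s (m - d) ≠ 0)
    (hbcd : s (m - b - c - d) ≠ 0) :
    frenkelTuraevProduct s h (n + 1) a b c d - frenkelTuraevProduct s h n a b c d =
      frenkelTuraevProduct s h n a b c d * (s b * s c * s d * s (2 * m - b - c - d) /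
        (s (m - b) * s (m - c) * s (m - d) * s (m - b - c - d))) := by
  have hthree := hs.frenkelTuraev_step m b c d
  rw [frenkelTuraevProduct_succ s h n a b c d m hm]
  generalize 2 * m - b - c - d = r at *
  field_simp
  linear_combination frenkelTuraevProduct s h n a b c d * hthree

theorem frenkelTuraevProduct_succ_sub [NeZero (2 : F)] (hs : ThreeTermRelation s)
    (hbal : b + c + d + e = 2 * a + (n + 1) * h)
    (ha : poch s h (a + h) (n + 2) ≠ 0) (hb : poch s h (a + h - b) (n + 1) ≠ 0)
    (hc : poch s h (a + h - c) (n + 1) ≠ 0) (hd : poch s h (a + h - d) (n + 1) ≠ 0)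
    (he : poch s h (a - e) (n + 2) ≠ 0) :
    frenkelTuraevProduct s h (n + 1) a b c d - frenkelTuraevProduct s h n a b c d =
      -(s (a + h) * s (a + 2 * h) * s ((n + 1) * h + e) * s ((n + 1) * h + a - e) /
        (s (a - e) * s (a + h - e) * s ((n + 1) * h + a) * s (a + (n + 2) * h))) *
        (s b / s (a + h - b) * (s c / s (a + h - c)) * (s d / s (a + h - d))) *
          frenkelTuraevProduct s h n (a + 2 * h) (b + h) (c + h) (d + h) := by
  obtain ⟨m, hm⟩ : ∃ m, m = a + (n + 1) * h := ⟨_, rfl⟩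
  have hm0 : s m ≠ 0 := ne_zero_of_poch_ne_zero ha n (by lia) (by rw [hm]; ring)
  have hm1 : s (m + h) ≠ 0 := ne_zero_of_poch_ne_zero ha (n + 1) (by lia)
    (by rw [hm]; push_cast; ring)
  have hmb : s (m - b) ≠ 0 := ne_zero_of_poch_ne_zero hb n (by lia) (by rw [hm]; ring)
  have hmc : s (m - c) ≠ 0 := ne_zero_of_poch_ne_zero hc n (by lia) (by rw [hm]; ring)
  have hmd : s (m - d) ≠ 0 := ne_zero_of_poch_ne_zero hd n (by lia) (by rw [hm]; ring)
  have he0 : s (a - e) ≠ 0 := ne_zero_of_poch_ne_zero he 0 (by lia)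
  have he1 : s (a + h - e) ≠ 0 := ne_zero_of_poch_ne_zero he 1 (by lia)
  have hen : s (m - e) ≠ 0 := ne_zero_of_poch_ne_zero he (n + 1) (by lia)
    (by rw [hm]; push_cast; ring)
  have ha1 : s (a + h) ≠ 0 := ne_zero_of_poch_ne_zero ha 0 (by lia)
  have ha2 : s (a + 2 * h) ≠ 0 := ne_zero_of_poch_ne_zero ha 1 (by lia)
  have hb1 : s (a + h - b) ≠ 0 := ne_zero_of_poch_ne_zero hb 0 (by lia)
  have hc1 : s (a + h - c) ≠ 0 := ne_zero_of_poch_ne_zero hc 0 (by lia)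
  have hd1 : s (a + h - d) ≠ 0 := ne_zero_of_poch_ne_zero hd 0 (by lia)
  have hneg {x y : F} (hxy : x = -y) : s x = -s y := by rw [hxy, hs.odd]
  have hbcd : s (m - b - c - d) = -s (a - e) := hneg (by linear_combination hm - hbal)
  have hbcd_h : s (m - b - c - d - h) = -s (a + h - e) := hneg (by linear_combination hm - hbal)
  have hbcd_0 : s (a - b - c - d) = -s (m - e) := hneg (by linear_combination hm - hbal)
  rw [frenkelTuraevProduct_succ_sub_eq_mul hs hm hmb hmc hmd (by simp [hbcd, he0]),
    frenkelTuraevProduct_shift hm (poch_ne_zero_of_le ha 0 (by lia)) hb1 hc1 hd1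
      (by simp [hbcd_h, he1]),
    hbcd, hbcd_h, hbcd_0,
    show 2 * m - b - c - d = (n + 1) * h + e by linear_combination 2 * hm - hbal,
    show (n + 1) * h + a = m by rw [hm]; ring, show a + (n + 2) * h = m + h by rw [hm]; ring]
  generalize a + 2 * h = a₂, (n + 1) * h + e = r at *
  field_simp

theorem vwpTerm_succ_sub [NeZero (2 : F)] (hs : ThreeTermRelation s) (hk : k ≤ n)
    (hh : poch s h h (n + 1) ≠ 0) (ha : poch s h a (2 * n + 3) ≠ 0)
    (he : poch s h (a - e) (n + 2) ≠ 0) :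
    vwpTerm s h a [b, c, d, e + h, -((n + 1) * h)] (k + 1) -
        vwpTerm s h a [b, c, d, e, -(n * h)] (k + 1) =
      -(s (a + h) * s (a + 2 * h) * s ((n + 1) * h + e) * s ((n + 1) * h + a - e) /
        (s (a - e) * s (a + h - e) * s ((n + 1) * h + a) * s (a + (n + 2) * h))) *
        (s b / s (a + h - b) * (s c / s (a + h - c)) * (s d / s (a + h - d))) *
          vwpTerm s h (a + 2 * h) [b + h, c + h, d + h, e + h, -(n * h)] k := by
  rw [vwpTerm_cons _ _ _ b, vwpTerm_cons _ _ _ c, vwpTerm_cons _ _ _ d, vwpTerm_cons _ _ _ b,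
    vwpTerm_cons _ _ _ c, vwpTerm_cons _ _ _ d, ← mul_sub, ← mul_sub, ← mul_sub,
    vwpTerm_pair_succ_sub hs hk hh ha he, wellPoisedRatio_succ, wellPoisedRatio_succ,
    wellPoisedRatio_succ, vwpTerm_cons _ _ _ (b + h), vwpTerm_cons _ _ _ (c + h),
    vwpTerm_cons _ _ _ (d + h)]
  ring

theorem sum_vwpTerm_eq_frenkelTuraevProduct [NeZero (2 : F)] (hs : ThreeTermRelation s)
    (hbal : b + c + d + e = 2 * a + (n + 1) * h)
    (hh : poch s h h n ≠ 0) (ha : poch s h a (2 * n + 1) ≠ 0)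
    (hb : poch s h (a + h - b) n ≠ 0) (hc : poch s h (a + h - c) n ≠ 0)
    (hd : poch s h (a + h - d) n ≠ 0) (he : poch s h (a + h - e) (2 * n) ≠ 0) :
    ∑ k ∈ range (n + 1), vwpTerm s h a [b, c, d, e, -(n * h)] k =
      frenkelTuraevProduct s h n a b c d := by
  induction n generalizing a b c d e with
  | zero =>
    have ha0 : s a ≠ 0 := ne_zero_of_poch_ne_zero ha 0 (by lia)
    simp [vwpTerm_zero, ha0, frenkelTuraevProduct]
  | succ n ih =>
    obtain ⟨e, rfl⟩ : ∃ e', e = e' + h := ⟨e - h, (sub_add_cancel e h).symm⟩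
    push_cast at hbal ⊢
    replace hbal : b + c + d + e = 2 * a + (n + 1) * h := by linear_combination hbal
    have ha0 : s a ≠ 0 := ne_zero_of_poch_ne_zero ha 0 (by lia)
    have he' : poch s h (a - e) (n + 2) ≠ 0 := poch_ne_zero_of_le he 0 (by lia)
    have hsame := ih hbal (poch_ne_zero_of_le hh 0 (by lia)) (poch_ne_zero_of_le ha 0 (by lia))
      (poch_ne_zero_of_le hb 0 (by lia)) (poch_ne_zero_of_le hc 0 (by lia))
      (poch_ne_zero_of_le hd 0 (by lia)) (poch_ne_zero_of_le he 1 (by lia))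
    have hshift := ih (a := a + 2 * h) (b := b + h) (c := c + h) (d := d + h) (e := e + h)
      (by linear_combination hbal) (poch_ne_zero_of_le hh 0 (by lia))
      (poch_ne_zero_of_le ha 2 (by lia)) (poch_ne_zero_of_le hb 1 (by lia))
      (poch_ne_zero_of_le hc 1 (by lia)) (poch_ne_zero_of_le hd 1 (by lia))
      (poch_ne_zero_of_le he 2 (by lia))
    have hvanish : vwpTerm s h a [b, c, d, e, -(n * h)] (n + 1) = 0 :=
      vwpTerm_eq_zero_of_lt (n := n) hs.map_zero (by simp) (by lia)
    have hterms := fun k (hk : k ∈ range (n + 1)) =>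
      vwpTerm_succ_sub (b := b) (c := c) (d := d) hs (by simpa [Nat.lt_succ_iff] using hk) hh ha he'
    have hproduct := frenkelTuraevProduct_succ_sub hs hbal (poch_ne_zero_of_le ha 1 (by lia)) hb hc
      hd he'
    have hsum := sum_congr rfl hterms
    rw [← mul_sum, hshift, ← hproduct, sum_sub_distrib] at hsum
    have hlower : ∑ k ∈ range (n + 1), vwpTerm s h a [b, c, d, e, -(n * h)] (k + 1) + 1 =
        frenkelTuraevProduct s h n a b c d := by
      rw [← hsame, ← vwpTerm_zero [b, c, d, e, -(n * h)] ha0, ← sum_range_succ', sum_range_succ,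
        hvanish, add_zero]
    rw [sum_range_succ', vwpTerm_zero _ ha0]
    linear_combination hsum + hlower

end FrenkelTuraev

section Bailey

variable {F K : Type*} [Field F] [Field K] {s : F → K} {h a b c d e f g l : F} {i j k m n : ℕ}

theorem wellPoisedRatio_mul_frenkelTuraevProduct (hl : l = 2 * a + h - b - c - d)
    (hlk : poch s h (l + h) k ≠ 0) (hal : poch s h (a - l) k ≠ 0) :
    wellPoisedRatio s h a (a - l) k *
        frenkelTuraevProduct s h k l (l + b - a) (l + c - a) (l + d - a) =
      wellPoisedRatio s h a b k * wellPoisedRatio s h a c k * wellPoisedRatio s h a d k := by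
  simp only [frenkelTuraevProduct, wellPoisedRatio]
  rw [show l + h - (l + b - a) - (l + c - a) - (l + d - a) = a - l by rw [hl]; ring,
    show l + h - (l + b - a) - (l + c - a) = d by rw [hl]; ring,
    show l + h - (l + b - a) - (l + d - a) = c by rw [hl]; ring,
    show l + h - (l + c - a) - (l + d - a) = b by rw [hl]; ring,
    show l + h - (l + b - a) = a + h - b by ring, show l + h - (l + c - a) = a + h - c by ring,
    show l + h - (l + d - a) = a + h - d by ring, show a + h - (a - l) = l + h by ring]
  field

theorem wellPoisedRatio_mul_mul_eq_sum [NeZero (2 : F)] (hs : ThreeTermRelation s)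
    (hl : l = 2 * a + h - b - c - d) (hh : poch s h h k ≠ 0) (hl' : poch s h l (2 * k + 1) ≠ 0)
    (hla : poch s h (l + h - a - k * h) (2 * k) ≠ 0) (hb : poch s h (a + h - b) k ≠ 0)
    (hc : poch s h (a + h - c) k ≠ 0) (hd : poch s h (a + h - d) k ≠ 0) :
    wellPoisedRatio s h a b k * wellPoisedRatio s h a c k * wellPoisedRatio s h a d k =
      wellPoisedRatio s h a (a - l) k * ∑ j ∈ range (k + 1),
        vwpTerm s h l [l + b - a, l + c - a, l + d - a, a + k * h, -(k * h)] j := by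
  have hlower : ∀ x, l + h - (l + x - a) = a + h - x := fun x => by ring
  have hal : poch s h (a - l) k ≠ 0 := by
    have hpart : poch s h (l + h - a - k * h) k ≠ 0 := poch_ne_zero_of_le hla 0 (by lia)
    rw [poch_reflect hs.odd (y := a - l) (by ring)] at hpart
    exact right_ne_zero_of_mul hpart
  rw [sum_vwpTerm_eq_frenkelTuraevProduct hs (by rw [hl]; ring) hh hl' (by rwa [hlower])
    (by rwa [hlower]) (by rwa [hlower]) (by rwa [← sub_sub]),
    wellPoisedRatio_mul_frenkelTuraevProduct hl (poch_ne_zero_of_le hl' 1 (by lia)) hal]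

theorem poch_mul_poch_symm (s : F → K) (h x : F) (i j : ℕ) :
    poch s h x (j + i) * poch s h (x + (j + i) * h) j =
      poch s h x (2 * j) * poch s h (x + 2 * j * h) i := by
  have hleft := poch_add s h x (j + i) j
  have hright := poch_add s h x (2 * j) i
  push_cast at hleft hright
  rw [← hleft, ← hright, show j + i + j = 2 * j + i by ring]

theorem vwpTerm_singleton_add (hs : s.Odd) (ha : s (a + 2 * j * h) ≠ 0)
    (hh : poch s h h (j + i) ≠ 0) (hal : poch s h (a - l) (j + i) ≠ 0) :
    vwpTerm s h a [a - l] (j + i) * (wellPoisedRatio s h l (a + (j + i) * h) j *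
        wellPoisedRatio s h l (-((j + i) * h)) j) =
      s (a + 2 * j * h) / s a * (poch s h a (2 * j) / poch s h (l + h) (2 * j)) *
        vwpTerm s h (a + 2 * j * h) [a - l] i := by
  have hupper := poch_mul_poch_symm s h a i j
  have hlower := poch_mul_poch_symm s h (l + h) i j
  have hcancel_h : poch s h (-((j + i) * h)) j / poch s h h (j + i) =
      (-1) ^ j / poch s h h i := by
    rw [div_eq_div_iff hh (poch_ne_zero_of_le hh 0 (by lia)),
      poch_reflect hs (y := h + i * h) (by ring), add_comm j, poch_add]
    ring
  have hsign : ((-1) ^ j * (-1) ^ j : K) = 1 := pow_mul_pow_eq_one j (by ring)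
  have hcancel_l : poch s h (a - l) (j + i) / poch s h (l + h - (a + (j + i) * h)) j =
      (-1) ^ j * poch s h (a - l) i := by
    have hreflect : poch s h (l + h - (a + (j + i) * h)) j =
        (-1) ^ j * poch s h (a - l + i * h) j := poch_reflect hs (by ring)
    have hsplit : poch s h (a - l + i * h) j ≠ 0 := poch_ne_zero_of_le hal i (by lia)
    rw [hreflect, div_eq_iff (by simp [hsplit]), add_comm j, poch_add]
    linear_combination -(poch s h (a - l) i * poch s h (a - l + i * h) j) * hsign
  have hcast : a + 2 * (j + i : ℕ) * h = a + 2 * j * h + 2 * i * h := by push_cast; ring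
  have hbase : a + 2 * j * h + h - (a - l) = l + h + 2 * j * h := by ring
  have hnum : l + h - -((j + i) * h) = l + h + (j + i) * h := by ring
  have hden : a + h - (a - l) = l + h := by ring
  simp only [vwpTerm, List.map_cons, List.map_nil, List.prod_cons, List.prod_nil, mul_one,
    wellPoisedRatio, add_sub_cancel_left, hcast, hbase, hnum, hden]
  calc
    _ = s (a + 2 * j * h + 2 * i * h) / s a *
        (poch s h a (j + i) * poch s h (a + (j + i) * h) j) *
        (poch s h (-((j + i) * h)) j / poch s h h (j + i)) *
        (poch s h (a - l) (j + i) / poch s h (l + h - (a + (j + i) * h)) j) /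
        (poch s h (l + h) (j + i) * poch s h (l + h + (j + i) * h) j) := by
      simp only [div_eq_mul_inv, mul_inv]
      ring
    _ = _ := by
      rw [hupper, hlower, hcancel_h, hcancel_l]
      simp only [div_eq_mul_inv, mul_inv]
      linear_combination (exp := 1) (s (a + 2 * j * h + 2 * i * h) * (s a)⁻¹ * poch s h a (2 * j) *
        poch s h (a + 2 * j * h) i * (poch s h h i)⁻¹ * poch s h (a - l) i *
        (poch s h (l + h) (2 * j))⁻¹ * (poch s h (l + h + 2 * j * h) i)⁻¹) *
          (hsign - mul_inv_cancel₀ ha)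

theorem vwpTerm_add (hs : s.Odd) (ha : s (a + 2 * j * h) ≠ 0)
    (hh : poch s h h (j + i) ≠ 0) (hal : poch s h (a - l) (j + i) ≠ 0) (bs : List F) :
    vwpTerm s h a ((a - l) :: bs) (j + i) * (wellPoisedRatio s h l (a + (j + i) * h) j *
        wellPoisedRatio s h l (-((j + i) * h)) j) =
      s (a + 2 * j * h) / s a * (poch s h a (2 * j) / poch s h (l + h) (2 * j)) *
        (bs.map fun b => wellPoisedRatio s h a b j).prod *
          vwpTerm s h (a + 2 * j * h) ((a - l) :: bs.map (· + j * h)) i := by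
  induction bs with
  | nil => simpa using vwpTerm_singleton_add hs ha hh hal
  | cons b bs ih =>
    rw [vwpTerm_perm (List.Perm.swap b (a - l) bs), List.map_cons, List.map_cons, List.prod_cons,
      vwpTerm_perm (List.Perm.swap (b + j * h) (a - l) _), vwpTerm_cons _ _ _ b,
      vwpTerm_cons _ _ _ (b + j * h), wellPoisedRatio_add]
    linear_combination wellPoisedRatio s h a b j *
      wellPoisedRatio s h (a + 2 * j * h) (b + j * h) i * ih

theorem wellPoisedRatio_mul_div (hs : s.Odd) (hbal : e + f + g = a + l + (j + m + 1) * h)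
    (hg : poch s h (l + h - g) j ≠ 0) :
    wellPoisedRatio s h a g j * (poch s h (a + 2 * j * h + h - (e + j * h) - (f + j * h)) m /
        poch s h (a + 2 * j * h + h - (g + j * h)) m) =
      (-1) ^ j * wellPoisedRatio s h l g j *
        (poch s h (a + h - e - f) (j + m) / poch s h (a + h - g) (j + m)) := by
  have hupper : poch s h (a + h - e - f) (j + m) = (-1) ^ j * poch s h (l + h - g) j *
      poch s h (a + 2 * j * h + h - (e + j * h) - (f + j * h)) m := by
    rw [add_comm j, poch_add, poch_reflect hs (x := a + h - e - f + m * h) (y := l + h - g)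
      (by linear_combination -hbal)]
    ring_nf
  have hlower : poch s h (a + h - g) (j + m) =
      poch s h (a + h - g) j * poch s h (a + 2 * j * h + h - (g + j * h)) m := by
    rw [poch_add]
    ring_nf
  rw [hupper, hlower, wellPoisedRatio, wellPoisedRatio,
    div_mul_div_comm, ← mul_div_assoc]
  congr 1
  have hsign : ((-1) ^ j * (-1) ^ j : K) = 1 := pow_mul_pow_eq_one j (by ring)
  have hcancel := div_mul_cancel₀ (poch s h g j) hg
  linear_combination -(poch s h (a + 2 * j * h + h - (e + j * h) - (f + j * h)) m) *
    ((-1) ^ j * (-1) ^ j * hcancel + poch s h g j * hsign)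

theorem frenkelTuraevProduct_eq_mul_div (s : F → K) (h : F) (n : ℕ) (a e f g : F) :
    frenkelTuraevProduct s h n a e f g =
      poch s h (a + h) n / poch s h (a + h - e - f - g) n *
        (poch s h (a + h - f - g) n / poch s h (a + h - e) n) *
        (poch s h (a + h - e - g) n / poch s h (a + h - f) n) *
        (poch s h (a + h - e - f) n / poch s h (a + h - g) n) := by
  simp only [frenkelTuraevProduct, div_eq_mul_inv, mul_inv]
  ring

theorem poch_div_poch_of_balanced (hs : s.Odd) (hbal : e + f + g = a + l + (j + m + 1) * h)
    (hl : poch s h (l + h) (j + m) ≠ 0) (ha : poch s h (a + h) (j + m) ≠ 0) :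
    poch s h (a + 2 * j * h + h) m /
        poch s h (a + 2 * j * h + h - (e + j * h) - (f + j * h) - (g + j * h)) m *
          ((-1) ^ j * (-1) ^ j * (-1) ^ j) =
      poch s h (a + h) (j + m) / poch s h (a + h - e - f - g) (j + m) *
        (poch s h (a + 2 * j * h + h) m / poch s h (a + h) (j + m) *
          (poch s h (l + h) (j + m) / poch s h (l + h + 2 * j * h) m)) := by
  have hfull : poch s h (a + h - e - f - g) (j + m) =
      (-1) ^ j * (-1) ^ m * poch s h (l + h) (j + m) := by
    rw [← pow_add]
    exact poch_reflect hs (by push_cast; linear_combination -hbal)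
  have htail : poch s h (a + 2 * j * h + h - (e + j * h) - (f + j * h) - (g + j * h)) m =
      (-1) ^ m * poch s h (l + h + 2 * j * h) m :=
    poch_reflect hs (by linear_combination -hbal)
  have hj : ((-1) ^ j * (-1) ^ j : K) = 1 := pow_mul_pow_eq_one j (by ring)
  have hj0 := left_ne_zero_of_mul_eq_one hj
  rw [hfull, htail]
  generalize poch s h (a + h) (j + m) = A, poch s h (l + h) (j + m) = L,
    poch s h (l + h + 2 * j * h) m = L', poch s h (a + 2 * j * h + h) m = A', (-1 : K) ^ j = ε at *
  field_simp
  linear_combination A' / L' * (ε ^ 2 + 1) * hj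

theorem frenkelTuraevProduct_add (hs : s.Odd) (hbal : e + f + g = a + l + (j + m + 1) * h)
    (he : poch s h (l + h - e) j ≠ 0) (hf : poch s h (l + h - f) j ≠ 0)
    (hg : poch s h (l + h - g) j ≠ 0) (hl : poch s h (l + h) (j + m) ≠ 0)
    (ha : poch s h (a + h) (j + m) ≠ 0) :
    wellPoisedRatio s h a e j * wellPoisedRatio s h a f j * wellPoisedRatio s h a g j *
        frenkelTuraevProduct s h m (a + 2 * j * h) (e + j * h) (f + j * h) (g + j * h) =
      wellPoisedRatio s h l e j * wellPoisedRatio s h l f j * wellPoisedRatio s h l g j *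
        frenkelTuraevProduct s h (j + m) a e f g *
        (poch s h (a + 2 * j * h + h) m / poch s h (a + h) (j + m) *
          (poch s h (l + h) (j + m) / poch s h (l + h + 2 * j * h) m)) := by
  have hbase := poch_div_poch_of_balanced hs hbal hl ha
  calc
    _ = poch s h (a + 2 * j * h + h) m /
          poch s h (a + 2 * j * h + h - (e + j * h) - (f + j * h) - (g + j * h)) m *
        (wellPoisedRatio s h a e j *
          (poch s h (a + 2 * j * h + h - (f + j * h) - (g + j * h)) m /
            poch s h (a + 2 * j * h + h - (e + j * h)) m)) *
        (wellPoisedRatio s h a f j *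
          (poch s h (a + 2 * j * h + h - (e + j * h) - (g + j * h)) m /
            poch s h (a + 2 * j * h + h - (f + j * h)) m)) *
        (wellPoisedRatio s h a g j *
          (poch s h (a + 2 * j * h + h - (e + j * h) - (f + j * h)) m /
            poch s h (a + 2 * j * h + h - (g + j * h)) m)) := by
      rw [frenkelTuraevProduct_eq_mul_div]
      ring
    _ = _ := by
      rw [wellPoisedRatio_mul_div (l := l) hs (by linear_combination hbal) he,
        wellPoisedRatio_mul_div (l := l) hs (by linear_combination hbal) hf,
        wellPoisedRatio_mul_div (l := l) hs hbal hg, frenkelTuraevProduct_eq_mul_div]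
      linear_combination (wellPoisedRatio s h l e j * wellPoisedRatio s h l f j *
        wellPoisedRatio s h l g j *
        (poch s h (a + h - f - g) (j + m) / poch s h (a + h - e) (j + m)) *
        (poch s h (a + h - e - g) (j + m) / poch s h (a + h - f) (j + m)) *
        (poch s h (a + h - e - f) (j + m) / poch s h (a + h - g) (j + m))) * hbase

theorem wellPoisedRatio_neg_eq (ha : poch s h a (2 * (j + m) + 1) ≠ 0)
    (hl : poch s h (l + h) (j + m) ≠ 0) :
    s (a + 2 * j * h) / s a * (poch s h a (2 * j) / poch s h (l + h) (2 * j)) *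
        wellPoisedRatio s h a (-((j + m) * h)) j *
        (poch s h (a + 2 * j * h + h) m / poch s h (a + h) (j + m) *
          (poch s h (l + h) (j + m) / poch s h (l + h + 2 * j * h) m)) =
      wellPoisedRatio s h l (-((j + m) * h)) j := by
  have ha0 : s a ≠ 0 := ne_zero_of_poch_ne_zero ha 0 (by lia)
  have ha1 : poch s h (a + h) (j + m) ≠ 0 := poch_ne_zero_of_le ha 1 (by lia)
  have haj : poch s h (a + h + (j + m) * h) j ≠ 0 := poch_ne_zero_of_le ha (j + m + 1) (by lia)
  have hshift := poch_mul_shift s h a (2 * j)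
  have ha_symm := poch_mul_poch_symm s h (a + h) m j
  have hl_symm := poch_mul_poch_symm s h (l + h) m j
  push_cast at hshift
  simp only [wellPoisedRatio, sub_neg_eq_add, show a + 2 * j * h + h = a + h + 2 * j * h by ring]
  have ha_cancel : s (a + 2 * j * h) / s a * poch s h a (2 * j) *
      poch s h (a + h + 2 * j * h) m =
        poch s h (a + h) (j + m) * poch s h (a + h + (j + m) * h) j := by
    rw [ha_symm, div_mul_eq_mul_div, mul_comm (s _), ← hshift, mul_div_cancel_left₀ _ ha0]
  have hl_cancel : poch s h (l + h) (j + m) /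
      (poch s h (l + h) (2 * j) * poch s h (l + h + 2 * j * h) m) =
      (poch s h (l + h + (j + m) * h) j)⁻¹ := by
    rw [← hl_symm, div_mul_cancel_left₀ hl]
  calc
    _ = (s (a + 2 * j * h) / s a * poch s h a (2 * j) * poch s h (a + h + 2 * j * h) m) /
          (poch s h (a + h) (j + m) * poch s h (a + h + (j + m) * h) j) *
        poch s h (-((j + m) * h)) j *
        (poch s h (l + h) (j + m) /
          (poch s h (l + h) (2 * j) * poch s h (l + h + 2 * j * h) m)) := by
      simp only [div_eq_mul_inv, mul_inv]
      ring
    _ = _ := by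
      rw [ha_cancel, hl_cancel, div_self (mul_ne_zero ha1 haj), one_mul, div_eq_mul_inv]

theorem sum_vwpTerm_mul_wellPoisedRatio [NeZero (2 : F)] (hs : ThreeTermRelation s)
    (hbal : e + f + g = a + l + (j + m + 1) * h) (hh : poch s h h (j + m) ≠ 0)
    (ha : poch s h a (2 * (j + m) + 1) ≠ 0) (hl : poch s h l (2 * (j + m) + 1) ≠ 0)
    (hal : poch s h (a - l) (j + m) ≠ 0) (hae : poch s h (a + h - e) (j + m) ≠ 0)
    (haf : poch s h (a + h - f) (j + m) ≠ 0) (hag : poch s h (a + h - g) (j + m) ≠ 0)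
    (hle : poch s h (l + h - e) (j + m) ≠ 0) (hlf : poch s h (l + h - f) (j + m) ≠ 0)
    (hlg : poch s h (l + h - g) (j + m) ≠ 0) :
    ∑ i ∈ range (m + 1), vwpTerm s h a [a - l, e, f, g, -((j + m) * h)] (j + i) *
        (wellPoisedRatio s h l (a + (j + i) * h) j * wellPoisedRatio s h l (-((j + i) * h)) j) =
      wellPoisedRatio s h l e j * wellPoisedRatio s h l f j * wellPoisedRatio s h l g j *
        wellPoisedRatio s h l (-((j + m) * h)) j * frenkelTuraevProduct s h (j + m) a e f g := by
  have hl1 : poch s h (l + h) (j + m) ≠ 0 := poch_ne_zero_of_le hl 1 (by lia)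
  have hneg : -((j + m) * h) + j * h = -(m * h) := by ring
  have hperm : [e + j * h, f + j * h, g + j * h, a - l, -(m * h)].Perm
      [a - l, e + j * h, f + j * h, g + j * h, -(m * h)] :=
    List.perm_middle (l₁ := [e + j * h, f + j * h, g + j * h])
  have hterms : ∀ i ∈ range (m + 1), vwpTerm s h a [a - l, e, f, g, -((j + m) * h)] (j + i) *
      (wellPoisedRatio s h l (a + (j + i) * h) j * wellPoisedRatio s h l (-((j + i) * h)) j) =
      s (a + 2 * j * h) / s a * (poch s h a (2 * j) / poch s h (l + h) (2 * j)) *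
        (wellPoisedRatio s h a e j * wellPoisedRatio s h a f j * wellPoisedRatio s h a g j *
          wellPoisedRatio s h a (-((j + m) * h)) j) *
        vwpTerm s h (a + 2 * j * h) [e + j * h, f + j * h, g + j * h, a - l, -(m * h)] i := by
    intro i hi
    rw [mem_range] at hi
    rw [vwpTerm_add hs.odd (ne_zero_of_poch_ne_zero ha (2 * j) (by lia))
      (poch_ne_zero_of_le hh 0 (by lia)) (poch_ne_zero_of_le hal 0 (by lia)),
      vwpTerm_perm hperm]
    simp only [List.map_cons, List.map_nil, List.prod_cons, List.prod_nil, hneg]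
    ring
  have hlower : ∀ x, a + 2 * j * h + h - (x + j * h) = a + h - x + j * h := fun x => by ring
  have hsum := sum_vwpTerm_eq_frenkelTuraevProduct (n := m) (a := a + 2 * j * h) (b := e + j * h)
    (c := f + j * h) (d := g + j * h) (e := a - l) hs (by linear_combination hbal)
    (poch_ne_zero_of_le hh 0 (by lia)) (poch_ne_zero_of_le ha (2 * j) (by lia))
    (poch_ne_zero_of_le hae j (by lia) (hlower e)) (poch_ne_zero_of_le haf j (by lia) (hlower f))
    (poch_ne_zero_of_le hag j (by lia) (hlower g)) (poch_ne_zero_of_le hl (2 * j + 1) (by lia))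
  have hprod := frenkelTuraevProduct_add hs.odd hbal (poch_ne_zero_of_le hle 0 (by lia))
    (poch_ne_zero_of_le hlf 0 (by lia)) (poch_ne_zero_of_le hlg 0 (by lia)) hl1
    (poch_ne_zero_of_le ha 1 (by lia))
  have hratio := wellPoisedRatio_neg_eq ha hl1
  rw [sum_congr rfl hterms, ← mul_sum, hsum, ← hratio]
  linear_combination s (a + 2 * j * h) / s a * (poch s h a (2 * j) / poch s h (l + h) (2 * j)) *
    wellPoisedRatio s h a (-((j + m) * h)) j * hprod

theorem vwpTerm_eq_sum [NeZero (2 : F)] (hs : ThreeTermRelation s)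
    (hlam : l = 2 * a + h - b - c - d) (hk : k ≤ n) (hh : poch s h h n ≠ 0)
    (hl : poch s h l (2 * n + 1) ≠ 0) (hla : poch s h (l + h - a - n * h) (2 * n) ≠ 0)
    (hab : poch s h (a + h - b) n ≠ 0) (hac : poch s h (a + h - c) n ≠ 0)
    (had : poch s h (a + h - d) n ≠ 0) (bs : List F) :
    vwpTerm s h a (b :: c :: d :: bs) k = ∑ j ∈ range (k + 1),
      vwpTerm s h l [l + b - a, l + c - a, l + d - a] j * (vwpTerm s h a ((a - l) :: bs) k *
        (wellPoisedRatio s h l (a + k * h) j * wellPoisedRatio s h l (-(k * h)) j)) := by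
  have hla_le : poch s h (l + h - a - k * h) (2 * k) ≠ 0 :=
    poch_ne_zero_of_le hla (n - k) (by lia) (by rw [Nat.cast_sub hk]; ring)
  have hratio := wellPoisedRatio_mul_mul_eq_sum hs hlam (poch_ne_zero_of_le hh 0 (by lia))
    (poch_ne_zero_of_le hl 0 (by lia)) hla_le (poch_ne_zero_of_le hab 0 (by lia))
    (poch_ne_zero_of_le hac 0 (by lia)) (poch_ne_zero_of_le had 0 (by lia))
  rw [vwpTerm_cons, vwpTerm_cons, vwpTerm_cons, ← mul_assoc, ← mul_assoc, hratio, mul_sum, sum_mul]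
  refine sum_congr rfl fun j _ => ?_
  simp only [vwpTerm_cons]
  ring

theorem sum_vwpTerm_eq_mul_sum_vwpTerm [NeZero (2 : F)] (hs : ThreeTermRelation s)
    (hlam : l = 2 * a + h - b - c - d) (hbal : e + f + g = a + l + (n + 1) * h)
    (hh : poch s h h n ≠ 0) (ha : poch s h a (2 * n + 1) ≠ 0) (hl : poch s h l (2 * n + 1) ≠ 0)
    (hla : poch s h (l + h - a - n * h) (2 * n) ≠ 0)
    (ha_lower : ∀ x ∈ [b, c, d, e, f, g], poch s h (a + h - x) n ≠ 0)
    (hl_lower : ∀ x ∈ [e, f, g], poch s h (l + h - x) n ≠ 0) :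
    ∑ k ∈ range (n + 1), vwpTerm s h a [b, c, d, e, f, g, -(n * h)] k =
      frenkelTuraevProduct s h n a e f g * ∑ j ∈ range (n + 1),
        vwpTerm s h l [l + b - a, l + c - a, l + d - a, e, f, g, -(n * h)] j := by
  have hal : poch s h (a - l) n ≠ 0 := by
    have hpart : poch s h (l + h - a - n * h) n ≠ 0 := poch_ne_zero_of_le hla 0 (by lia)
    rw [poch_reflect hs.odd (y := a - l) (by ring)] at hpart
    exact right_ne_zero_of_mul hpart
  simp only [List.forall_mem_cons, List.not_mem_nil, false_imp_iff, implies_true, and_true]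
    at ha_lower hl_lower
  obtain ⟨hab, hac, had, hae, haf, hag⟩ := ha_lower
  obtain ⟨hle, hlf, hlg⟩ := hl_lower
  let V (j i : ℕ) : K := vwpTerm s h l [l + b - a, l + c - a, l + d - a] j *
    (vwpTerm s h a [a - l, e, f, g, -(n * h)] (j + i) *
      (wellPoisedRatio s h l (a + (j + i) * h) j * wellPoisedRatio s h l (-((j + i) * h)) j))
  have hrow : ∀ k ∈ range (n + 1), vwpTerm s h a [b, c, d, e, f, g, -(n * h)] k =
      ∑ j ∈ range (k + 1), V j (k - j) := by
    intro k hk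
    rw [vwpTerm_eq_sum hs hlam (Nat.lt_succ_iff.mp (mem_range.mp hk)) hh hl hla hab hac had]
    refine sum_congr rfl fun j hj => ?_
    obtain ⟨i, rfl⟩ := Nat.exists_eq_add_of_le (Nat.lt_succ_iff.mp (mem_range.mp hj))
    simp only [V, Nat.add_sub_cancel_left, Nat.cast_add]
  have hcolumn : ∀ j ∈ range (n + 1), ∑ i ∈ range (n + 1 - j), V j i =
      frenkelTuraevProduct s h n a e f g *
        vwpTerm s h l [l + b - a, l + c - a, l + d - a, e, f, g, -(n * h)] j := by
    intro j hj
    obtain ⟨m, rfl⟩ := Nat.exists_eq_add_of_le (Nat.lt_succ_iff.mp (mem_range.mp hj))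
    simp only [V]
    push_cast at hbal ⊢
    rw [← mul_sum, show j + m + 1 - j = m + 1 by lia,
      sum_vwpTerm_mul_wellPoisedRatio hs hbal hh ha hl hal hae haf hag hle hlf hlg]
    simp only [vwpTerm_cons]
    ring
  rw [sum_congr rfl hrow, sum_range_diag_flip, sum_congr rfl hcolumn, mul_sum]

end Bailey

section Continuity

variable {T F K : Type*} [TopologicalSpace T] [Field F] [TopologicalSpace F] [IsTopologicalRing F]
  [Field K] [TopologicalSpace K] [IsTopologicalRing K] {s : F → K}

theorem continuous_poch (hs : Continuous s) (h : F) (n : ℕ) : Continuous fun x => poch s h x n :=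
  continuous_finsetProd _ fun _ _ => by fun_prop

variable [ContinuousInv₀ K] {h : F} {a b : T → F} {t : T} {k n : ℕ}

theorem continuousAt_wellPoisedRatio (hs : Continuous s) (ha : ContinuousAt a t)
    (hb : ContinuousAt b t) (hab : poch s h (a t + h - b t) k ≠ 0) :
    ContinuousAt (fun u => wellPoisedRatio s h (a u) (b u) k) t :=
  ((continuous_poch hs h k).continuousAt.comp hb).div
    ((continuous_poch hs h k).continuousAt.comp (by fun_prop)) hab

theorem continuousAt_sum_vwpTerm (hs : Continuous s) {bs : List (T → F)} (ha0 : s (a t) ≠ 0)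
    (hcont : ∀ b ∈ a :: bs, ContinuousAt b t)
    (hlower : ∀ b ∈ a :: bs, poch s h (a t + h - b t) n ≠ 0) :
    ContinuousAt (fun u => ∑ k ∈ range (n + 1), vwpTerm s h (a u) (bs.map (· u)) k) t := by
  refine tendsto_finsetSum _ fun k hk => ?_
  have ha : ContinuousAt a t := hcont a (by simp)
  have hprod : ContinuousAt
      (fun u => ((a :: bs).map fun b => wellPoisedRatio s h (a u) (b u) k).prod) t :=
    tendsto_list_prod _ fun b hb => continuousAt_wellPoisedRatio hs ha (hcont b hb)
      (poch_ne_zero_of_le (hlower b hb) 0 (by simpa [Nat.lt_succ_iff] using hk))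
  have hbase : ContinuousAt (fun u => s (a u + 2 * k * h) / s (a u)) t :=
    (hs.continuousAt.comp (by fun_prop)).div (hs.continuousAt.comp ha) ha0
  simpa only [vwpTerm, List.map_map, List.map_cons, Function.comp_def] using! hbase.mul hprod

theorem continuousAt_frenkelTuraevProduct (hs : Continuous s) {e f g : F} (ha : ContinuousAt a t)
    (hlower : ∀ x ∈ [e, f, g, e + f + g], poch s h (a t + h - x) n ≠ 0) :
    ContinuousAt (fun u => frenkelTuraevProduct s h n (a u) e f g) t := by
  have hpoch : ∀ {v : T → F}, ContinuousAt v t → ContinuousAt (fun u => poch s h (v u) n) t :=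
    fun hv => (continuous_poch hs h n).continuousAt.comp hv
  have hden : poch s h (a t + h - e) n * poch s h (a t + h - f) n * poch s h (a t + h - g) n *
      poch s h (a t + h - e - f - g) n ≠ 0 := by
    simpa [and_assoc, sub_sub, add_assoc] using hlower
  exact (((hpoch (by fun_prop)).mul (hpoch (by fun_prop))).mul (hpoch (by fun_prop))).mul
    (hpoch (by fun_prop)) |>.div ((((hpoch (by fun_prop)).mul (hpoch (by fun_prop))).mul
      (hpoch (by fun_prop))).mul (hpoch (by fun_prop))) hden

end Continuity

section GenericParameters

open Filter Topology

variable {s : ℂ → ℂ} {h a b c d e f g l : ℂ} {n : ℕ}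

theorem eventually_poch_ne_zero (hs : Differentiable ℂ s) (hs0 : s ≠ 0) (h x : ℂ) {w : ℂ}
    (hw : w ≠ 0) (n : ℕ) : ∀ᶠ t in 𝓝[≠] 0, poch s h (x + w * t) n ≠ 0 := by
  simp only [poch, prod_ne_zero_iff, eventually_all_finset]
  intro i _
  have hline : AnalyticOnNhd ℂ (fun t => s (x + w * t + i * h)) Set.univ := by
    rw [Complex.analyticOnNhd_univ_iff_differentiable]
    fun_prop
  by_contra hzero
  simp only [not_eventually, not_not] at hzero
  have heq := hline.eqOn_zero_of_preconnected_of_frequently_eq_zero isPreconnected_univ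
    (Set.mem_univ 0) hzero
  refine hs0 <| funext fun z => ?_
  have hpreimage : x + w * ((z - x - i * h) / w) + i * h = z := by field
  exact hpreimage ▸ heq (Set.mem_univ ((z - x - i * h) / w))

theorem eventually_sum_vwpTerm_eq_mul_sum_vwpTerm (hs : ThreeTermRelation s)
    (hdiff : Differentiable ℂ s) (hs0 : s ≠ 0) (hlam : l = 2 * a + h - b - c - d)
    (hbal : e + f + g = a + l + (n + 1) * h) (hh : poch s h h n ≠ 0) : ∀ᶠ t in 𝓝[≠] 0,
    ∑ k ∈ range (n + 1), vwpTerm s h (a + t) [b + 3 * t, c, d, e, f, g, -(n * h)] k =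
      frenkelTuraevProduct s h n (a + t) e f g * ∑ j ∈ range (n + 1),
        vwpTerm s h (l - t) [l - t + (b + 3 * t) - (a + t), l - t + c - (a + t),
          l - t + d - (a + t), e, f, g, -(n * h)] j := by
  have hpoch : ∀ {v : ℂ → ℂ} (x w : ℂ) (m : ℕ), w ≠ 0 → (∀ t, v t = x + w * t) →
      ∀ᶠ t in 𝓝[≠] 0, poch s h (v t) m ≠ 0 := fun x w m hw hv => by
    simpa only [hv] using eventually_poch_ne_zero hdiff hs0 h x hw m
  have ha := hpoch (v := fun t => a + t) a 1 (2 * n + 1) (by norm_num) fun t => by ring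
  have hl := hpoch (v := fun t => l - t) l (-1) (2 * n + 1) (by norm_num) fun t => by ring
  have hla := hpoch (v := fun t => l - t + h - (a + t) - n * h) (l + h - a - n * h) (-2) (2 * n)
    (by norm_num) fun t => by ring
  have hab := hpoch (v := fun t => a + t + h - (b + 3 * t)) (a + h - b) (-2) n (by norm_num)
    fun t => by ring
  have hax := fun x => hpoch (v := fun t => a + t + h - x) (a + h - x) 1 n (by norm_num)
    fun t => by ring
  have hlx := fun x => hpoch (v := fun t => l - t + h - x) (l + h - x) (-1) n (by norm_num)
    fun t => by ring
  filter_upwards [ha, hl, hla, hab, hax c, hax d, hax e, hax f, hax g, hlx e, hlx f, hlx g]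
    with t hat hlt hlat habt hact hadt haet haft hagt hlet hlft hlgt
  exact sum_vwpTerm_eq_mul_sum_vwpTerm hs (by rw [hlam]; ring) (by rw [hbal]; ring) hh hat hlt
    hlat (by simp [*]) (by simp [hlet, hlft, hlgt])

theorem sum_vwpTerm_eq_mul_sum_vwpTerm_of_differentiable (hs : ThreeTermRelation s)
    (hdiff : Differentiable ℂ s) (hlam : l = 2 * a + h - b - c - d)
    (hbal : e + f + g = a + l + (n + 1) * h) (ha : s a ≠ 0) (hl : s l ≠ 0)
    (ha_lower : ∀ x ∈ [a, b, c, d, e, f, g, -(n * h)], poch s h (a + h - x) n ≠ 0)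
    (hl_lower : ∀ x ∈ [l, l + b - a, l + c - a, l + d - a, e, f, g, -(n * h)],
      poch s h (l + h - x) n ≠ 0)
    (hl1 : poch s h (l + h) n ≠ 0) :
    ∑ k ∈ range (n + 1), vwpTerm s h a [b, c, d, e, f, g, -(n * h)] k =
      frenkelTuraevProduct s h n a e f g * ∑ j ∈ range (n + 1),
        vwpTerm s h l [l + b - a, l + c - a, l + d - a, e, f, g, -(n * h)] j := by
  -- Along this line no denominator on either side vanishes identically.
  let A (t : ℂ) := a + t
  let B (t : ℂ) := b + 3 * t
  let L (t : ℂ) := l - t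
  let lhs (t : ℂ) := ∑ k ∈ range (n + 1), vwpTerm s h (A t) [B t, c, d, e, f, g, -(n * h)] k
  let rhs (t : ℂ) := frenkelTuraevProduct s h n (A t) e f g * ∑ j ∈ range (n + 1),
    vwpTerm s h (L t) [L t + B t - A t, L t + c - A t, L t + d - A t, e, f, g, -(n * h)] j
  have hgeneric : lhs =ᶠ[𝓝[≠] 0] rhs :=
    eventually_sum_vwpTerm_eq_mul_sum_vwpTerm hs hdiff (fun hzero => ha (congrFun hzero a)) hlam
      hbal (by simpa using ha_lower a (by simp))
  have hlhs : ContinuousAt lhs 0 := by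
    refine continuousAt_sum_vwpTerm (a := A) (bs := [B, fun _ => c, fun _ => d, fun _ => e,
      fun _ => f, fun _ => g, fun _ => -(n * h)]) hdiff.continuous (by simpa [A]) ?_
      (by simpa [A, B] using ha_lower)
    simp only [List.forall_mem_cons, List.not_mem_nil, false_imp_iff, implies_true, and_true]
    and_intros <;> fun_prop
  have hrhs : ContinuousAt rhs 0 := by
    refine ContinuousAt.mul (continuousAt_frenkelTuraevProduct hdiff.continuous (by fun_prop) ?_)
      (continuousAt_sum_vwpTerm (a := L) (bs := [fun t => L t + B t - A t, fun t => L t + c - A t,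
        fun t => L t + d - A t, fun _ => e, fun _ => f, fun _ => g, fun _ => -(n * h)])
        hdiff.continuous (by simpa [L]) ?_ (by simpa [L, A, B] using hl_lower))
    · have hefg : poch s h (a + h - (e + f + g)) n ≠ 0 := by
        rw [poch_reflect hs.odd (y := l + h) (by rw [hbal]; ring)]
        simp [hl1]
      simp_all [A]
    · simp only [List.forall_mem_cons, List.not_mem_nil, false_imp_iff, implies_true, and_true]
      and_intros <;> fun_prop
  have := ((hlhs.eventuallyEq_nhds_iff_eventuallyEq_nhdsNE hrhs).mp hgeneric).eq_of_nhds
  simpa [lhs, rhs, A, B, L] using this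

end GenericParameters

section ThetaSeries

open Filter

/-- The general term of the theta series `∑ₖ p ^ (k(k-1)/2) w ^ k`, summed over `k : ℤ`. -/
def thetaTerm (p w : ℂ) (k : ℤ) : ℂ := p ^ (k * (k - 1) / 2) * w ^ k

/-- The theta series `∑ₖ p ^ (k(k-1)/2) w ^ k`. -/
def thetaSeries (p w : ℂ) : ℂ := ∑' k : ℤ, thetaTerm p w k

variable {p w x y z : ℂ}

theorem two_mul_mul_pred_ediv_two (k : ℤ) : 2 * (k * (k - 1) / 2) = k * (k - 1) :=
  Int.two_mul_ediv_two_of_even (Int.even_mul_pred_self k)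

theorem thetaTerm_add_one (hp : p ≠ 0) (hw : w ≠ 0) (k : ℤ) :
    thetaTerm p w (k + 1) = p ^ k * w * thetaTerm p w k := by
  have hexp : (k + 1) * (k + 1 - 1) / 2 = k * (k - 1) / 2 + k := by
    linarith [two_mul_mul_pred_ediv_two k, two_mul_mul_pred_ediv_two (k + 1)]
  rw [thetaTerm, thetaTerm, hexp, zpow_add₀ hp, zpow_add_one₀ hw]
  ring

theorem thetaTerm_neg (hp : p ≠ 0) (k : ℤ) :
    thetaTerm p w (-k) = thetaTerm p (p / w) k := by
  have hexp : -k * (-k - 1) / 2 = k * (k - 1) / 2 + k := by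
    linarith [two_mul_mul_pred_ediv_two k, two_mul_mul_pred_ediv_two (-k)]
  rw [thetaTerm, thetaTerm, hexp, zpow_add₀ hp, div_zpow, zpow_neg]
  ring

theorem thetaTerm_mul (p z w : ℂ) (k : ℤ) : thetaTerm p (z * w) k = z ^ k * thetaTerm p w k := by
  rw [thetaTerm, thetaTerm, mul_zpow]
  ring

theorem summable_norm_thetaTerm (hp : p ≠ 0) (hp1 : ‖p‖ < 1) (hw : w ≠ 0) :
    Summable fun k => ‖thetaTerm p w k‖ := by
  have hnat : ∀ {v : ℂ}, v ≠ 0 → Summable fun k : ℕ => ‖thetaTerm p v k‖ := fun {v} hv => by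
    have hne (k : ℕ) : thetaTerm p v k ≠ 0 := mul_ne_zero (zpow_ne_zero _ hp) (zpow_ne_zero _ hv)
    refine summable_of_ratio_test_tendsto_lt_one zero_lt_one
      (.of_forall fun k => norm_ne_zero_iff.mpr (hne k)) ?_
    have hratio (k : ℕ) :
        ‖‖thetaTerm p v (k + 1 : ℕ)‖‖ / ‖‖thetaTerm p v k‖‖ = ‖p‖ ^ k * ‖v‖ := by
      rw [norm_norm, norm_norm, Nat.cast_add_one, thetaTerm_add_one hp hv, norm_mul,
        mul_div_cancel_right₀ _ (norm_ne_zero_iff.mpr (hne k)), zpow_natCast, norm_mul, norm_pow]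
    simpa only [hratio, zero_mul] using
      (tendsto_pow_atTop_nhds_zero_of_lt_one (norm_nonneg p) hp1).mul_const ‖v‖
  refine .of_nat_of_neg (hnat hw) ?_
  simpa only [thetaTerm_neg hp] using hnat (div_ne_zero hp hw)

/-- The parity classes of `ℤ × ℤ`, parametrized by the half sum and the half difference. -/
def parityEquiv : (ℤ × ℤ) ⊕ (ℤ × ℤ) ≃ ℤ × ℤ where
  toFun := Sum.elim (fun u => (u.1 + u.2, u.1 - u.2)) fun u => (u.1 + u.2, u.1 - u.2 + 1)
  invFun v := if Even (v.1 + v.2) then .inl ((v.1 + v.2) / 2, (v.1 - v.2) / 2)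
    else .inr ((v.1 + v.2 - 1) / 2, (v.1 - v.2 + 1) / 2)
  left_inv := by
    rintro (⟨i, j⟩ | ⟨i, j⟩)
    · dsimp only [Sum.elim_inl]
      rw [if_pos (by grind)]
      congr 2 <;> lia
    · dsimp only [Sum.elim_inr]
      rw [if_neg (by grind)]
      congr 2 <;> lia
  right_inv := by
    rintro ⟨k, l⟩
    dsimp only
    split_ifs
    · simp only [Sum.elim_inl, Prod.mk.injEq]
      grind
    · simp only [Sum.elim_inr, Prod.mk.injEq]
      grind

theorem thetaTerm_mul_thetaTerm_of_even (hp : p ≠ 0) (hx : x ≠ 0) (hy : y ≠ 0) (i j : ℤ) :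
    thetaTerm p (-(x * y)) (i + j) * thetaTerm p (-(x / y)) (i - j) =
      thetaTerm (p ^ 2) (x ^ 2) i * thetaTerm (p ^ 2) (p * y ^ 2) j := by
  have hexp : (i + j) * (i + j - 1) / 2 + (i - j) * (i - j - 1) / 2 =
      2 * (i * (i - 1) / 2) + 2 * (j * (j - 1) / 2) + j := by
    linarith [two_mul_mul_pred_ediv_two i, two_mul_mul_pred_ediv_two j,
      two_mul_mul_pred_ediv_two (i + j), two_mul_mul_pred_ediv_two (i - j)]
  have hbase : (-(x * y)) ^ (i + j) * (-(x / y)) ^ (i - j) = (x ^ 2) ^ i * (y ^ 2) ^ j := by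
    rw [zpow_add₀ (by simp [hx, hy]), zpow_sub₀ (by simp [hx, hy]), ← mul_div_assoc,
      mul_right_comm, mul_div_assoc, ← mul_zpow, ← div_zpow]
    congr 2 <;> field
  calc thetaTerm p (-(x * y)) (i + j) * thetaTerm p (-(x / y)) (i - j)
      = p ^ ((i + j) * (i + j - 1) / 2 + (i - j) * (i - j - 1) / 2) *
          ((-(x * y)) ^ (i + j) * (-(x / y)) ^ (i - j)) := by
        rw [thetaTerm, thetaTerm, zpow_add₀ hp]
        ring
    _ = thetaTerm (p ^ 2) (x ^ 2) i * thetaTerm (p ^ 2) (p * y ^ 2) j := by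
        rw [hexp, hbase, thetaTerm, thetaTerm, zpow_add₀ hp, zpow_add₀ hp, zpow_mul, zpow_mul,
          mul_zpow p (y ^ 2)]
        norm_cast
        ring

theorem thetaTerm_mul_thetaTerm_of_odd (hp : p ≠ 0) (hx : x ≠ 0) (hy : y ≠ 0) (i j : ℤ) :
    thetaTerm p (-(x * y)) (i + j) * thetaTerm p (-(x / y)) (i - j + 1) =
      -(x / y) * (thetaTerm (p ^ 2) (p * x ^ 2) i * thetaTerm (p ^ 2) (y ^ 2) j) := by
  have hcancel : p ^ (i - j) * p ^ j = p ^ i := by rw [← zpow_add₀ hp, sub_add_cancel]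
  rw [thetaTerm_add_one hp (by simp [hx, hy]), mul_left_comm,
    thetaTerm_mul_thetaTerm_of_even hp hx hy, thetaTerm_mul _ p, thetaTerm_mul _ p]
  linear_combination
    -(x / y) * thetaTerm (p ^ 2) (x ^ 2) i * thetaTerm (p ^ 2) (y ^ 2) j * hcancel

theorem thetaSeries_mul_thetaSeries (hp : p ≠ 0) (hp1 : ‖p‖ < 1) (hx : x ≠ 0) (hy : y ≠ 0) :
    thetaSeries p (-(x * y)) * thetaSeries p (-(x / y)) =
      thetaSeries (p ^ 2) (x ^ 2) * thetaSeries (p ^ 2) (p * y ^ 2) -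
        x / y * (thetaSeries (p ^ 2) (p * x ^ 2) * thetaSeries (p ^ 2) (y ^ 2)) := by
  have hprod {q v w : ℂ} (hq : q ≠ 0) (hq1 : ‖q‖ < 1) (hv : v ≠ 0) (hw : w ≠ 0) :
      HasSum (fun u : ℤ × ℤ => thetaTerm q v u.1 * thetaTerm q w u.2)
        (thetaSeries q v * thetaSeries q w) := by
    have hsv := summable_norm_thetaTerm hq hq1 hv
    have hsw := summable_norm_thetaTerm hq hq1 hw
    rw [thetaSeries, thetaSeries, tsum_mul_tsum_of_summable_norm hsv hsw]
    exact (summable_mul_of_summable_norm hsv hsw).hasSum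
  have hp2 : ‖p ^ 2‖ < 1 := by
    rw [norm_pow]
    exact pow_lt_one₀ (norm_nonneg p) hp1 two_ne_zero
  have heven := hprod (pow_ne_zero 2 hp) hp2 (pow_ne_zero 2 hx) (mul_ne_zero hp (pow_ne_zero 2 hy))
  have hodd := hprod (pow_ne_zero 2 hp) hp2 (mul_ne_zero hp (pow_ne_zero 2 hx)) (pow_ne_zero 2 hy)
  have hsplit := HasSum.sum (f := fun v => thetaTerm p (-(x * y)) (parityEquiv v).1 *
      thetaTerm p (-(x / y)) (parityEquiv v).2)
    (heven.congr_fun fun u => thetaTerm_mul_thetaTerm_of_even hp hx hy u.1 u.2)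
    ((hodd.mul_left (-(x / y))).congr_fun fun u => thetaTerm_mul_thetaTerm_of_odd hp hx hy u.1 u.2)
  have hall := hprod hp hp1 (neg_ne_zero.mpr (mul_ne_zero hx hy))
    (neg_ne_zero.mpr (div_ne_zero hx hy))
  rw [(parityEquiv.hasSum_iff.mpr hall).unique hsplit]
  ring

end ThetaSeries

section TripleProduct

open Filter Topology

/-- The finite `q`-Pochhammer symbol `(w; p)_m = (1 - w) (1 - w p) ⋯ (1 - w p ^ (m - 1))`. -/
def qPoch (p w : ℂ) (m : ℕ) : ℂ := ∏ j ∈ range m, (1 - w * p ^ j)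

/-- The infinite `q`-Pochhammer symbol `(w; p)_∞`. -/
def qPochInf (p w : ℂ) : ℂ := ∏' j : ℕ, (1 - w * p ^ j)

/-- The reciprocal of `(p; p)_m`, which vanishes for `m < 0`. -/
def invQFactorial (p : ℂ) (m : ℤ) : ℂ := if m < 0 then 0 else (qPoch p p m.toNat)⁻¹

/-- The Gaussian binomial coefficient `[M + N over N + k]` in base `p`. -/
def gaussBinom (p : ℂ) (M N : ℕ) (k : ℤ) : ℂ :=
  qPoch p p (M + N) * invQFactorial p (M - k) * invQFactorial p (N + k)

variable {p w z : ℂ}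

theorem qPoch_succ (p w : ℂ) (m : ℕ) : qPoch p w (m + 1) = qPoch p w m * (1 - w * p ^ m) :=
  prod_range_succ ..

theorem self_mul_pow_ne_one (hp1 : ‖p‖ < 1) (j : ℕ) : p * p ^ j ≠ 1 := by
  rw [← pow_succ']
  intro h
  have hnorm := congrArg norm h
  rw [norm_one, norm_pow] at hnorm
  exact (pow_lt_one₀ (norm_nonneg p) hp1 j.succ_ne_zero).ne hnorm

theorem invQFactorial_natCast (p : ℂ) (m : ℕ) : invQFactorial p m = (qPoch p p m)⁻¹ := by
  simp [invQFactorial]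

theorem invQFactorial_of_neg {m : ℤ} (hm : m < 0) : invQFactorial p m = 0 := if_pos hm

theorem invQFactorial_sub_one (hp1 : ‖p‖ < 1) (m : ℤ) :
    invQFactorial p (m - 1) = (1 - p ^ m) * invQFactorial p m := by
  rcases lt_trichotomy m 0 with hm | rfl | hm
  · rw [invQFactorial_of_neg hm, invQFactorial_of_neg (by lia), mul_zero]
  · simp [invQFactorial]
  · obtain ⟨m, rfl⟩ : ∃ i : ℕ, m = i + 1 := ⟨(m - 1).toNat, by lia⟩
    rw [add_sub_cancel_right, ← Nat.cast_add_one, invQFactorial_natCast, invQFactorial_natCast,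
      qPoch_succ, mul_inv, mul_left_comm, zpow_natCast, pow_succ',
      mul_inv_cancel₀ (sub_ne_zero.mpr (self_mul_pow_ne_one hp1 m).symm), mul_one]

theorem gaussBinom_symm (p : ℂ) (M N : ℕ) (k : ℤ) :
    gaussBinom p M N (-k) = gaussBinom p N M k := by
  rw [gaussBinom, gaussBinom, add_comm M N, sub_neg_eq_add, ← sub_eq_add_neg]
  ring

theorem gaussBinom_succ (hp : p ≠ 0) (hp1 : ‖p‖ < 1) (M N : ℕ) (k : ℤ) :
    gaussBinom p (M + 1) N k =
      gaussBinom p M N k + p ^ (M - (k - 1)) * gaussBinom p M N (k - 1) := by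
  have hM := invQFactorial_sub_one hp1 (M - (k - 1))
  have hN := invQFactorial_sub_one hp1 (N + k)
  have hpow : p ^ (M - (k - 1)) * p ^ (N + k) = p ^ (M + N + 1) := by
    rw [← zpow_add₀ hp, ← zpow_natCast]
    congr 1
    push_cast
    ring
  rw [show (M : ℤ) - (k - 1) - 1 = M - k by ring] at hM
  rw [gaussBinom, gaussBinom, gaussBinom, show M + 1 + N = M + N + 1 by ring, qPoch_succ,
    Nat.cast_add_one, show (M : ℤ) + 1 - k = M - (k - 1) by ring,
    ← add_sub_assoc, hM, hN]
  linear_combination qPoch p p (M + N) * invQFactorial p (M - (k - 1)) *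
    invQFactorial p (N + k) * hpow

theorem hasSum_thetaTerm_mul_gaussBinom_succ (hp : p ≠ 0) (hp1 : ‖p‖ < 1) (hz : z ≠ 0) {M N : ℕ}
    {P : ℂ} (hP : HasSum (fun k => thetaTerm p (-z) k * gaussBinom p M N k) P) :
    HasSum (fun k => thetaTerm p (-z) k * gaussBinom p (M + 1) N k) (P * (1 - z * p ^ M)) := by
  have hshift := ((Equiv.subRight (1 : ℤ)).hasSum_iff.mpr hP).mul_left (-z * p ^ M)
  rw [show P * (1 - z * p ^ M) = P + -z * p ^ M * P by ring]
  refine (hP.add hshift).congr_fun fun k => ?_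
  have hterm := thetaTerm_add_one hp (neg_ne_zero.mpr hz) (k - 1)
  have hpow : p ^ (M - (k - 1)) * p ^ (k - 1) = p ^ M := by
    rw [← zpow_add₀ hp, sub_add_cancel, zpow_natCast]
  rw [sub_add_cancel] at hterm
  rw [gaussBinom_succ hp hp1, Function.comp_apply, Equiv.subRight_apply, hterm]
  linear_combination (-z) * thetaTerm p (-z) (k - 1) * gaussBinom p M N (k - 1) * hpow

theorem hasSum_thetaTerm_mul_gaussBinom (hp : p ≠ 0) (hp1 : ‖p‖ < 1) (hz : z ≠ 0) (M N : ℕ) :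
    HasSum (fun k => thetaTerm p (-z) k * gaussBinom p M N k)
      (qPoch p z M * qPoch p (p / z) N) := by
  have hflip {M N : ℕ} {w P : ℂ}
      (h : HasSum (fun k => thetaTerm p (-w) k * gaussBinom p M N k) P) :
      HasSum (fun k => thetaTerm p (-(p / w)) k * gaussBinom p N M k) P := by
    refine ((Equiv.neg ℤ).hasSum_iff.mpr h).congr_fun fun k => ?_
    rw [Function.comp_apply, Equiv.neg_apply, thetaTerm_neg hp, div_neg, gaussBinom_symm]
  induction M with
  | succ M ih =>
    rw [qPoch_succ, mul_right_comm]
    exact hasSum_thetaTerm_mul_gaussBinom_succ hp hp1 hz ih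
  | zero =>
    induction N with
    | zero =>
      have hbase := hasSum_single (f := fun k => thetaTerm p (-z) k * gaussBinom p 0 0 k) 0
        fun k hk => by
          rcases lt_or_gt_of_ne hk with hk | hk <;> simp [gaussBinom, invQFactorial, hk]
      simpa [thetaTerm, gaussBinom, invQFactorial, qPoch] using hbase
    | succ N ih =>
      have hstep := hasSum_thetaTerm_mul_gaussBinom_succ hp hp1 (div_ne_zero hp hz) (hflip ih)
      have := hflip hstep
      rw [div_div_cancel₀ hp] at this
      rwa [qPoch_succ, ← mul_assoc]

theorem summable_norm_neg_mul_pow (hp1 : ‖p‖ < 1) (w : ℂ) : Summable fun j => ‖-(w * p ^ j)‖ := by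
  simpa using (summable_geometric_of_lt_one (norm_nonneg p) hp1).mul_left ‖w‖

theorem multipliable_one_sub_mul_pow (hp1 : ‖p‖ < 1) (w : ℂ) :
    Multipliable fun j => 1 - w * p ^ j := by
  simpa only [sub_eq_add_neg] using
    multipliable_one_add_of_summable (summable_norm_neg_mul_pow hp1 w)

theorem tendsto_qPoch (hp1 : ‖p‖ < 1) (w : ℂ) : Tendsto (qPoch p w) atTop (𝓝 (qPochInf p w)) :=
  (multipliable_one_sub_mul_pow hp1 w).hasProd.tendsto_prod_nat

theorem differentiable_qPochInf (hp1 : ‖p‖ < 1) : Differentiable ℂ (qPochInf p) := by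
  intro w
  obtain ⟨R, hR⟩ := exists_gt ‖w‖
  have hw : w ∈ Metric.ball 0 R := by simpa using hR
  have hprod : HasProdLocallyUniformlyOn (fun (j : ℕ) v => 1 + -(v * p ^ j))
      (fun v => ∏' j : ℕ, (1 + -(v * p ^ j))) (Metric.ball 0 R) := by
    refine ((summable_geometric_of_lt_one (norm_nonneg p) hp1).mul_left
      R).hasProdLocallyUniformlyOn_nat_one_add Metric.isOpen_ball
      (.of_forall fun j v hv => ?_) fun j => by fun_prop
    rw [norm_neg, norm_mul, norm_pow]
    gcongr
    exact (mem_ball_zero_iff.mp hv).le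
  have hdiff := hprod.differentiableOn
    (.of_forall fun _ => by simpa [prod_fn] using
      DifferentiableOn.finsetProd (fun _ _ => by fun_prop)) Metric.isOpen_ball
  simp only [← sub_eq_add_neg] at hdiff
  exact hdiff.differentiableAt (Metric.isOpen_ball.mem_nhds hw)

theorem qPochInf_ne_zero (hp1 : ‖p‖ < 1) (hw : ∀ j : ℕ, w * p ^ j ≠ 1) : qPochInf p w ≠ 0 := by
  simp only [qPochInf, sub_eq_add_neg]
  refine tprod_one_add_ne_zero_of_summable (fun j => ?_) (summable_norm_neg_mul_pow hp1 w)
  rw [← sub_eq_add_neg, sub_ne_zero]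
  exact (hw j).symm

theorem tendsto_inv_qPoch_self (hp1 : ‖p‖ < 1) :
    Tendsto (fun m => (qPoch p p m)⁻¹) atTop (𝓝 (qPochInf p p)⁻¹) :=
  (tendsto_qPoch hp1 p).inv₀ (qPochInf_ne_zero hp1 (self_mul_pow_ne_one hp1))

theorem tendsto_invQFactorial (hp1 : ‖p‖ < 1) :
    Tendsto (invQFactorial p) atTop (𝓝 (qPochInf p p)⁻¹) := by
  rw [← Nat.map_cast_int_atTop, tendsto_map'_iff]
  exact (tendsto_inv_qPoch_self hp1).congr fun m => (invQFactorial_natCast p m).symm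

theorem exists_norm_invQFactorial_le (hp1 : ‖p‖ < 1) : ∃ C, ∀ m, ‖invQFactorial p m‖ ≤ C := by
  obtain ⟨C, hC⟩ := (Metric.isBounded_range_of_tendsto _
    (tendsto_inv_qPoch_self hp1)).exists_norm_le
  refine ⟨C, fun m => ?_⟩
  rw [invQFactorial]
  split_ifs
  · rw [norm_zero]
    exact (norm_nonneg _).trans (hC _ ⟨0, rfl⟩)
  · exact hC _ ⟨m.toNat, rfl⟩

theorem tendsto_gaussBinom (hp1 : ‖p‖ < 1) (k : ℤ) :
    Tendsto (fun N => gaussBinom p N N k) atTop (𝓝 (qPochInf p p)⁻¹) := by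
  have hnum : Tendsto (fun N : ℕ => qPoch p p (N + N)) atTop (𝓝 (qPochInf p p)) :=
    (tendsto_qPoch hp1 p).comp (tendsto_id.atTop_add_nonneg fun N => N.zero_le)
  have hden {v : ℕ → ℤ} (hv : Tendsto v atTop atTop) := (tendsto_invQFactorial hp1).comp hv
  have := (hnum.mul (hden (tendsto_atTop_add_const_right _ (-k) tendsto_natCast_atTop_atTop))).mul
    (hden (tendsto_atTop_add_const_right _ k tendsto_natCast_atTop_atTop))
  rwa [mul_inv_cancel₀ (qPochInf_ne_zero hp1 (self_mul_pow_ne_one hp1)), one_mul] at this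

theorem exists_norm_gaussBinom_le (hp1 : ‖p‖ < 1) : ∃ C, ∀ M N k, ‖gaussBinom p M N k‖ ≤ C := by
  obtain ⟨B, hB⟩ := exists_norm_invQFactorial_le hp1
  obtain ⟨C, hC⟩ := (Metric.isBounded_range_of_tendsto _ (tendsto_qPoch hp1 p)).exists_norm_le
  refine ⟨C * B * B, fun M N k => ?_⟩
  have hB0 : 0 ≤ B := (norm_nonneg _).trans (hB 0)
  have hC0 : 0 ≤ C := (norm_nonneg _).trans (hC _ ⟨0, rfl⟩)
  rw [gaussBinom, norm_mul, norm_mul]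
  gcongr
  exacts [hC _ ⟨_, rfl⟩, hB _, hB _]

theorem qPochInf_mul_qPochInf_eq_thetaSeries (hp : p ≠ 0) (hp1 : ‖p‖ < 1) (hz : z ≠ 0) :
    qPochInf p z * qPochInf p (p / z) = (qPochInf p p)⁻¹ * thetaSeries p (-z) := by
  have hprod := (tendsto_qPoch hp1 z).mul (tendsto_qPoch hp1 (p / z))
  obtain ⟨C, hC⟩ := exists_norm_gaussBinom_le hp1
  have hsum := tendsto_tsum_of_dominated_convergence
    ((summable_norm_thetaTerm hp hp1 (neg_ne_zero.mpr hz)).mul_right C)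
    (fun k => (tendsto_gaussBinom hp1 k).const_mul (thetaTerm p (-z) k))
    (.of_forall fun N k => by
      rw [norm_mul]
      exact mul_le_mul_of_nonneg_left (hC N N k) (norm_nonneg _))
  simp only [(hasSum_thetaTerm_mul_gaussBinom hp hp1 hz _ _).tsum_eq] at hsum
  rw [tendsto_nhds_unique hprod hsum, tsum_mul_right, mul_comm, thetaSeries]

end TripleProduct

section BaileyPrefactor

variable {F K : Type*} [Field F] [Field K] {s : F → K} {h a e f g l : F} {n : ℕ}

theorem frenkelTuraevProduct_eq_of_balanced (hs : s.Odd) (hbal : e + f + g = a + l + (n + 1) * h) :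
    frenkelTuraevProduct s h n a e f g =
      poch s h (a + h) n * poch s h (a + h - e - f) n * poch s h (l + h - e) n *
          poch s h (l + h - f) n /
        (poch s h (a + h - e) n * poch s h (a + h - f) n * poch s h (l + h - e - f) n *
          poch s h (l + h) n) := by
  have heg : poch s h (a + h - e - g) n = (-1) ^ n * poch s h (l + h - f) n :=
    poch_reflect hs (by linear_combination -hbal)
  have hfg : poch s h (a + h - f - g) n = (-1) ^ n * poch s h (l + h - e) n :=
    poch_reflect hs (by linear_combination -hbal)
  have hg : poch s h (a + h - g) n = (-1) ^ n * poch s h (l + h - e - f) n :=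
    poch_reflect hs (by linear_combination -hbal)
  have hefg : poch s h (a + h - e - f - g) n = (-1) ^ n * poch s h (l + h) n :=
    poch_reflect hs (by linear_combination -hbal)
  have hsign : (-1 : K) ^ n ≠ 0 := by simp
  rw [frenkelTuraevProduct, heg, hfg, hg, hefg,
    ← mul_div_mul_left (poch s h (a + h) n * _ * _ * poch s h (l + h - f) n) _
      (mul_ne_zero hsign hsign)]
  ring_nf

end BaileyPrefactor

section Theta

open Complex

variable {p : ℝ}

theorem theta_eq_qPochInf_mul_qPochInf (hp1 : |p| < 1) (z : ℂ) :
    theta p z = qPochInf p z * qPochInf p (p / z) := by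
  have hp1' : ‖(p : ℂ)‖ < 1 := by simpa
  rw [qPochInf, qPochInf, ← (multipliable_one_sub_mul_pow hp1' z).tprod_mul
    (multipliable_one_sub_mul_pow hp1' (p / z))]
  exact tprod_congr fun j => by rw [pow_succ']; ring

theorem exists_theta_mul_mul_theta_div_eq (hp1 : |p| < 1) : ∃ A B : ℂ → ℂ, ∀ x y, x ≠ 0 → y ≠ 0 →
    theta p (x * y) * theta p (x / y) = x * (A x * B y - A y * B x) := by
  have hp1' : ‖(p : ℂ)‖ < 1 := by simpa
  rcases eq_or_ne (p : ℂ) 0 with hp | hp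
  · have htheta (z : ℂ) : theta p z = 1 - z := by
      rw [theta, tprod_eq_mulSingle 0 fun j hj => by simp [hp, hj]]
      simp [hp]
    refine ⟨fun x => x + x⁻¹, fun _ => 1, fun x y hx hy => ?_⟩
    rw [htheta, htheta]
    field
  · refine ⟨fun x => (qPochInf p p)⁻¹ ^ 2 * thetaSeries (p ^ 2) (x ^ 2) / x,
      fun y => thetaSeries (p ^ 2) (p * y ^ 2), fun x y hx hy => ?_⟩
    rw [theta_eq_qPochInf_mul_qPochInf hp1, theta_eq_qPochInf_mul_qPochInf hp1,
      qPochInf_mul_qPochInf_eq_thetaSeries hp hp1' (mul_ne_zero hx hy),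
      qPochInf_mul_qPochInf_eq_thetaSeries hp hp1' (div_ne_zero hx hy)]
    have hprod := thetaSeries_mul_thetaSeries hp hp1' hx hy
    have hcancel : x * x⁻¹ = 1 := mul_inv_cancel₀ hx
    linear_combination (qPochInf p p)⁻¹ ^ 2 * (hprod - (thetaSeries (p ^ 2) (x ^ 2) *
      thetaSeries (p ^ 2) (p * y ^ 2)) * hcancel)

/-- The theta function in the additive variable `x = log z`, multiplied by `z ^ (-1 / 2)`. This
factor makes it odd, so that it satisfies `ThreeTermRelation`. -/
def oddTheta (p : ℝ) (x : ℂ) : ℂ := exp (-(x / 2)) * theta p (exp x)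

theorem theta_exp (p : ℝ) (x : ℂ) : theta p (exp x) = exp (x / 2) * oddTheta p x := by
  rw [oddTheta, ← mul_assoc, ← exp_add, add_neg_cancel, exp_zero, one_mul]

theorem threeTermRelation_oddTheta (hp1 : |p| < 1) : ThreeTermRelation (oddTheta p) := by
  obtain ⟨A, B, hAB⟩ := exists_theta_mul_mul_theta_div_eq hp1
  refine .of_plucker (α := fun x => A (exp x)) (β := fun x => B (exp x)) fun x y => ?_
  have hexp : exp (-((x + y) / 2)) * exp (-((x - y) / 2)) * exp x = 1 := by
    rw [← exp_add, ← exp_add, exp_eq_one_iff]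
    exact ⟨0, by push_cast; ring⟩
  have htheta := hAB (exp x) (exp y) (exp_ne_zero x) (exp_ne_zero y)
  rw [oddTheta, oddTheta, exp_add, exp_sub x y]
  linear_combination exp (-((x + y) / 2)) * exp (-((x - y) / 2)) * htheta +
    (A (exp x) * B (exp y) - A (exp y) * B (exp x)) * hexp

theorem differentiable_oddTheta (hp1 : |p| < 1) : Differentiable ℂ (oddTheta p) := by
  have hdiff : Differentiable ℂ (qPochInf p) := differentiable_qPochInf (by simpa)
  have hprod : oddTheta p =
      fun x => exp (-(x / 2)) * (qPochInf p (exp x) * qPochInf p (p * exp (-x))) := by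
    funext x
    rw [oddTheta, theta_eq_qPochInf_mul_qPochInf hp1, exp_neg x, ← div_eq_mul_inv]
  rw [hprod]
  fun_prop

end Theta

section Lift

open Complex

variable {p q : ℝ} {n : ℕ} {a b c d e f g l x : ℂ}

/-- The logarithm of the base `q ^ 2`, which is the step of the shifted factorials in the additive
variable. -/
def logBase (q : ℝ) : ℂ := 2 * Real.log q

theorem qp_eq_exp (q : ℝ) (x : ℂ) : qp q x = exp (x / 2 * logBase q) := by
  rw [qp, logBase]
  ring_nf

theorem qp_two_mul (q : ℝ) (x : ℂ) : qp q (2 * x) = exp (x * logBase q) := by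
  rw [qp_eq_exp, mul_div_cancel_left₀ x two_ne_zero]

theorem qp_neg_two_mul (q : ℝ) (x : ℂ) : qp q (-2 * x) = exp (-(x * logBase q)) := by
  rw [qp_eq_exp]
  ring_nf

theorem qp_two (q : ℝ) : qp q 2 = exp (logBase q) := by
  rw [qp_eq_exp, div_self two_ne_zero, one_mul]

theorem epoch_exp (p q : ℝ) (x : ℂ) (k : ℕ) :
    epoch p q (exp x) k =
      exp ((k * x + k * (k - 1) / 2 * logBase q) / 2) * poch (oddTheta p) (logBase q) x k := by
  induction k with
  | zero => simp [epoch]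
  | succ k ih =>
    have hexp : exp ((k * x + k * (k - 1) / 2 * logBase q) / 2) * exp ((x + k * logBase q) / 2) =
        exp (((k + 1 : ℕ) * x + (k + 1 : ℕ) * ((k + 1 : ℕ) - 1) / 2 * logBase q) / 2) := by
      rw [← exp_add]
      push_cast
      ring_nf
    have hsucc : epoch p q (exp x) (k + 1) =
        epoch p q (exp x) k * theta p (exp x * qp q (2 * k)) := prod_range_succ ..
    rw [hsucc, ih, qp_two_mul, ← exp_add, theta_exp, poch_succ, ← hexp]
    ring

theorem poch_oddTheta_ne_zero {k : ℕ} (hx : epoch p q (exp x) k ≠ 0) :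
    poch (oddTheta p) (logBase q) x k ≠ 0 := by
  rw [epoch_exp] at hx
  exact right_ne_zero_of_mul hx

theorem epoch_exp_div_epoch_exp (p q : ℝ) (x y : ℂ) (k : ℕ) :
    epoch p q (exp x) k / epoch p q (exp y) k = exp (k * (x - y) / 2) *
      (poch (oddTheta p) (logBase q) x k / poch (oddTheta p) (logBase q) y k) := by
  rw [epoch_exp, epoch_exp, mul_div_mul_comm, ← exp_sub]
  ring_nf

theorem theta_exp_div_theta_exp (p : ℝ) (x y : ℂ) :
    theta p (exp x) / theta p (exp y) = exp ((x - y) / 2) * (oddTheta p x / oddTheta p y) := by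
  rw [theta_exp, theta_exp, mul_div_mul_comm, ← exp_sub]
  ring_nf

theorem epoch_div_epoch_eq_wellPoisedRatio (p q : ℝ) (a b : ℂ) (k : ℕ) :
    epoch p q (exp b) k / epoch p q (exp a * qp q 2 / exp b) k =
      exp (k * (b - (a + logBase q) / 2)) * wellPoisedRatio (oddTheta p) (logBase q) a b k := by
  rw [qp_two, ← exp_add, ← exp_sub, epoch_exp_div_epoch_exp, wellPoisedRatio]
  ring_nf

theorem tenW9_exp (p q : ℝ) (hbal : b + c + d + e + f + g = 3 * a + (n + 2) * logBase q) :
    tenW9 p q n (exp a) (exp b) (exp c) (exp d) (exp e) (exp f) (exp g) (qp q (-2 * n)) =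
      ∑ k ∈ range (n + 1), vwpTerm (oddTheta p) (logBase q) a
        [b, c, d, e, f, g, -(n * logBase q)] k := by
  refine sum_congr rfl fun k _ => ?_
  have hbase : theta p (exp a * qp q (4 * k)) / theta p (exp a) =
      exp (k * logBase q) * (oddTheta p (a + 2 * k * logBase q) / oddTheta p a) := by
    rw [qp_eq_exp, ← exp_add, theta_exp_div_theta_exp]
    ring_nf
  let r (x : ℂ) : ℂ := exp (k * (x - (a + logBase q) / 2))
  have hexp : exp (k * logBase q) * exp (k * logBase q) *
      (r a * r b * r c * r d * r e * r f * r g * r (-(n * logBase q))) = 1 := by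
    simp only [r, ← exp_add]
    rw [← exp_zero]
    congr 1
    linear_combination k * hbal
  have hratio (x : ℂ) : epoch p q (exp x) k / epoch p q (exp a * qp q 2 / exp x) k =
      r x * wellPoisedRatio (oddTheta p) (logBase q) a x k :=
    epoch_div_epoch_eq_wellPoisedRatio p q a x k
  have hratio_self := hratio a
  rw [mul_div_cancel_left₀ _ (exp_ne_zero a)] at hratio_self
  rw [qp_neg_two_mul]
  calc
    _ = theta p (exp a * qp q (4 * k)) / theta p (exp a) * qp q (2 * k) *
        (epoch p q (exp a) k / epoch p q (qp q 2) k *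
          ([b, c, d, e, f, g, -(n * logBase q)].map fun x =>
            epoch p q (exp x) k / epoch p q (exp a * qp q 2 / exp x) k).prod) := by
      simp only [List.map_cons, List.map_nil, List.prod_cons, List.prod_nil]
      ring
    _ = _ := by
      simp only [hbase, qp_two_mul, hratio_self, hratio, vwpTerm, List.map_cons, List.map_nil,
        List.prod_cons, List.prod_nil]
      generalize wellPoisedRatio (oddTheta p) (logBase q) a = w
      linear_combination oddTheta p (a + 2 * k * logBase q) / oddTheta p a *
        (w a k * w b k * w c k * w d k * w e k * w f k * w g k * w (-(n * logBase q)) k) * hexp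

theorem oddTheta_ne_zero_of_tenW9Den_ne_zero
    (hden : tenW9Den p q n (exp a) (exp b) (exp c) (exp d) (exp e) (exp f) (exp g)
      (qp q (-2 * n)) ≠ 0) : oddTheta p a ≠ 0 := by
  simp only [tenW9Den, mul_ne_zero_iff, and_assoc] at hden
  have := hden.1
  rw [theta_exp] at this
  exact right_ne_zero_of_mul this

theorem poch_ne_zero_of_tenW9Den_ne_zero
    (hden : tenW9Den p q n (exp a) (exp b) (exp c) (exp d) (exp e) (exp f) (exp g)
      (qp q (-2 * n)) ≠ 0) :
    ∀ x ∈ [a, b, c, d, e, f, g, -(n * logBase q)],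
      poch (oddTheta p) (logBase q) (a + logBase q - x) n ≠ 0 := by
  rw [tenW9Den, qp_neg_two_mul] at hden
  simp only [mul_ne_zero_iff, and_assoc] at hden
  intro x hx
  apply poch_oddTheta_ne_zero
  rw [exp_sub, exp_add, ← qp_two]
  revert x
  simpa using hden.2

theorem epoch_quotient_eq_frenkelTuraevProduct (hp1 : |p| < 1)
    (hbal : e + f + g = a + l + (n + 1) * logBase q) :
    epoch p q (exp a * qp q 2) n * epoch p q (exp a * qp q 2 / (exp e * exp f)) n *
        epoch p q (exp l * qp q 2 / exp e) n * epoch p q (exp l * qp q 2 / exp f) n /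
      (epoch p q (exp a * qp q 2 / exp e) n * epoch p q (exp a * qp q 2 / exp f) n *
        epoch p q (exp l * qp q 2 / (exp e * exp f)) n * epoch p q (exp l * qp q 2) n) =
      frenkelTuraevProduct (oddTheta p) (logBase q) n a e f g := by
  rw [frenkelTuraevProduct_eq_of_balanced (threeTermRelation_oddTheta hp1).odd hbal]
  simp only [qp_two, ← exp_add, ← exp_sub, ← sub_sub]
  have hratio := epoch_exp_div_epoch_exp p q
  generalize logBase q = h at *
  have hexp : exp (n * (a - l) / 2) * exp (n * (a - l) / 2) *
      (exp (n * (l - a) / 2) * exp (n * (l - a) / 2)) = 1 := by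
    simp only [← exp_add]
    rw [← exp_zero]
    ring_nf
  calc
    _ = epoch p q (exp (a + h)) n / epoch p q (exp (l + h)) n *
          (epoch p q (exp (a + h - e - f)) n / epoch p q (exp (l + h - e - f)) n) *
          ((epoch p q (exp (l + h - e)) n / epoch p q (exp (a + h - e)) n) *
          (epoch p q (exp (l + h - f)) n / epoch p q (exp (a + h - f)) n)) := by ring
    _ = _ := by
      rw [← one_mul (_ / (_ * _)), ← hexp]
      simp only [hratio, sub_sub_sub_cancel_right, add_sub_add_right_eq_sub]
      ring

theorem tenW9_exp_eq_mul_tenW9_exp (hp1 : |p| < 1) (hlam : l = 2 * a + logBase q - b - c - d)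
    (hbal : e + f + g = a + l + (n + 1) * logBase q)
    (hden1 : tenW9Den p q n (exp a) (exp b) (exp c) (exp d) (exp e) (exp f) (exp g)
      (qp q (-2 * n)) ≠ 0)
    (hden2 : tenW9Den p q n (exp l) (exp l * exp b / exp a) (exp l * exp c / exp a)
      (exp l * exp d / exp a) (exp e) (exp f) (exp g) (qp q (-2 * n)) ≠ 0)
    (hden3 : epoch p q (exp l * qp q 2) n ≠ 0) :
    tenW9 p q n (exp a) (exp b) (exp c) (exp d) (exp e) (exp f) (exp g) (qp q (-2 * n)) =
      epoch p q (exp a * qp q 2) n * epoch p q (exp a * qp q 2 / (exp e * exp f)) n *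
          epoch p q (exp l * qp q 2 / exp e) n * epoch p q (exp l * qp q 2 / exp f) n /
        (epoch p q (exp a * qp q 2 / exp e) n * epoch p q (exp a * qp q 2 / exp f) n *
          epoch p q (exp l * qp q 2 / (exp e * exp f)) n * epoch p q (exp l * qp q 2) n) *
        tenW9 p q n (exp l) (exp l * exp b / exp a) (exp l * exp c / exp a)
          (exp l * exp d / exp a) (exp e) (exp f) (exp g) (qp q (-2 * n)) := by
  rw [epoch_quotient_eq_frenkelTuraevProduct hp1 hbal]
  simp only [← exp_add, ← exp_sub, qp_two] at hden2 hden3 ⊢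
  rw [tenW9_exp p q (by linear_combination hbal + hlam),
    tenW9_exp p q (by linear_combination hbal + hlam)]
  exact sum_vwpTerm_eq_mul_sum_vwpTerm_of_differentiable (threeTermRelation_oddTheta hp1)
    (differentiable_oddTheta hp1) hlam hbal (oddTheta_ne_zero_of_tenW9Den_ne_zero hden1)
    (oddTheta_ne_zero_of_tenW9Den_ne_zero hden2) (poch_ne_zero_of_tenW9Den_ne_zero hden1)
    (poch_ne_zero_of_tenW9Den_ne_zero hden2) (poch_oddTheta_ne_zero hden3)

end Lift

theorem elliptic_Bailey_general (p q : ℝ) (hp1 : |p| < 1) (_hq0 : 0 < q) (n : ℕ)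
    (a b c d e f g : ℂ)
    (ha : a ≠ 0) (hb : b ≠ 0) (hc : c ≠ 0) (hd : d ≠ 0) (he : e ≠ 0) (hf : f ≠ 0)
    (hbal : b * c * d * e * f * g = a ^ 3 * qp q (2 * ((n : ℂ) + 2)))
    (lam : ℂ) (hlam : lam = a ^ 2 * qp q 2 / (b * c * d))
    (hden1 : tenW9Den p q n a b c d e f g (qp q (-2 * (n : ℂ))) ≠ 0)
    (hden2 : tenW9Den p q n lam (lam * b / a) (lam * c / a) (lam * d / a) e f g
      (qp q (-2 * (n : ℂ))) ≠ 0)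
    (hden3 : epoch p q (lam * qp q 2) n ≠ 0) :
    tenW9 p q n a b c d e f g (qp q (-2 * (n : ℂ))) =
      epoch p q (a * qp q 2) n * epoch p q (a * qp q 2 / (e * f)) n *
          epoch p q (lam * qp q 2 / e) n * epoch p q (lam * qp q 2 / f) n /
        (epoch p q (a * qp q 2 / e) n * epoch p q (a * qp q 2 / f) n *
          epoch p q (lam * qp q 2 / (e * f)) n * epoch p q (lam * qp q 2) n) *
        tenW9 p q n lam (lam * b / a) (lam * c / a) (lam * d / a) e f g
          (qp q (-2 * (n : ℂ))) := by
  have hlog {z : ℂ} (hz : z ≠ 0) : ∃ x, Complex.exp x = z := ⟨_, Complex.exp_log hz⟩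
  obtain ⟨α, rfl⟩ := hlog ha
  obtain ⟨β, rfl⟩ := hlog hb
  obtain ⟨γ, rfl⟩ := hlog hc
  obtain ⟨δ, rfl⟩ := hlog hd
  obtain ⟨ε, rfl⟩ := hlog he
  obtain ⟨φ, rfl⟩ := hlog hf
  obtain ⟨l, hl⟩ : ∃ l, l = 2 * α + logBase q - β - γ - δ := ⟨_, rfl⟩
  obtain rfl : lam = Complex.exp l := by
    rw [hlam, hl, qp_two, ← Complex.exp_nat_mul]
    simp only [← Complex.exp_add, ← Complex.exp_sub]
    ring_nf
  obtain rfl : g = Complex.exp (α + l + (n + 1) * logBase q - ε - φ) := by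
    rw [qp_two_mul, ← Complex.exp_nat_mul] at hbal
    simp only [← Complex.exp_add] at hbal
    rw [← mul_right_inj' (Complex.exp_ne_zero (β + γ + δ + ε + φ)), hbal, ← Complex.exp_add, hl]
    push_cast
    ring_nf
  exact tenW9_exp_eq_mul_tenW9_exp hp1 hl (by ring) hden1 hden2 hden3

/-- Frenkel–Turaev's elliptic analogue of Bailey's transformation formula for
terminating balanced very-well-poised `₁₀ω₉` series: if
`bcdefg = a³q^{2(n+2)}` and `λ = a²q²/(bcd)`, then
`₁₀ω₉[a; b,c,d,e,f,g,q^{−2n}] = [(aq², aq²/ef, λq²/e, λq²/f)_n /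
  (aq²/e, aq²/f, λq²/ef, λq²)_n] ₁₀ω₉[λ; λb/a, λc/a, λd/a, e, f, g, q^{−2n}]`. -/
theorem elliptic_Bailey (p q : ℝ) (hp0 : 0 < p) (hp1 : p < 1) (hq0 : 0 < q) (hq1 : q < 1)
    (n : ℕ) (a b c d e f g : ℂ)
    (ha : a ≠ 0) (hb : b ≠ 0) (hc : c ≠ 0) (hd : d ≠ 0)
    (he : e ≠ 0) (hf : f ≠ 0) (hg : g ≠ 0)
    (hbal : b * c * d * e * f * g = a ^ 3 * qp q (2 * ((n : ℂ) + 2)))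
    (lam : ℂ) (hlam : lam = a ^ 2 * qp q 2 / (b * c * d))
    (hden1 : tenW9Den p q n a b c d e f g (qp q (-2 * (n : ℂ))) ≠ 0)
    (hden2 : tenW9Den p q n lam (lam * b / a) (lam * c / a) (lam * d / a) e f g
      (qp q (-2 * (n : ℂ))) ≠ 0)
    (hden3 : epoch p q (a * qp q 2 / e) n * epoch p q (a * qp q 2 / f) n *
      epoch p q (lam * qp q 2 / (e * f)) n * epoch p q (lam * qp q 2) n ≠ 0) :
    tenW9 p q n a b c d e f g (qp q (-2 * (n : ℂ))) =
      epoch p q (a * qp q 2) n * epoch p q (a * qp q 2 / (e * f)) n *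
          epoch p q (lam * qp q 2 / e) n * epoch p q (lam * qp q 2 / f) n /
        (epoch p q (a * qp q 2 / e) n * epoch p q (a * qp q 2 / f) n *
          epoch p q (lam * qp q 2 / (e * f)) n * epoch p q (lam * qp q 2) n) *
        tenW9 p q n lam (lam * b / a) (lam * c / a) (lam * d / a) e f g
          (qp q (-2 * (n : ℂ))) :=
  elliptic_Bailey_general p q (abs_lt.mpr ⟨by linarith, hp1⟩) hq0 n a b c d e f g ha hb hc hd he hf
    hbal lam hlam hden1 hden2 (right_ne_zero_of_mul hden3)

end
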